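/- Fix n, d ∈ ℕ, x ∈ ℝ^n, and smooth vector fields X_0, X_1, …, X_d : ℝ^n → ℝ^n that are bounded, have bounded first derivatives, and such that X_1, …, X_d are bracket generating. For 1 ≤ p < ∞, let F_p : L^p([0,1], ℝ^d) → ℝ^n be the endpoint map F_p(u) = γ_u(1), where γ_u is the trajectory of u starting at x. Then there exists p_c > 1 such that for every real p with 1 ≤ p < p_c, the map F_p is a Hurewicz fibration: for every topological space Z, every continuous g : Z × [0,1] → ℝ^n, and every continuous g̃_0 : Z → L^p([0,1], ℝ^d) with F_p(g̃_0(z)) = g(z,0) for all z ∈ Z, there exists a continuous g̃ : Z × [0,1] → L^p([0,1], ℝ^d) with g̃(z,0) = g̃_0(z) and F_p(g̃(z,s)) = g(z,s) for all (z,s) ∈ Z × [0,1]. -/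

import Mathlib

open MeasureTheory Set Filter Topology

noncomputable section

/-- The Lie bracket of two (smooth) vector fields on `ℝⁿ`:
`[Y,Z](x) = DZ(x)Y(x) − DY(x)Z(x)`. -/
def lieBracketVF {n : ℕ}
    (Y Z : EuclideanSpace ℝ (Fin n) → EuclideanSpace ℝ (Fin n)) :
    EuclideanSpace ℝ (Fin n) → EuclideanSpace ℝ (Fin n) :=
  fun x => fderiv ℝ Z x (Y x) - fderiv ℝ Y x (Z x)

/-- The iterated Lie brackets of the family `X₁, …, X_d`. -/
inductive IsIteratedBracket {n d : ℕ}
    (X : Fin d → EuclideanSpace ℝ (Fin n) → EuclideanSpace ℝ (Fin n)) :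
    (EuclideanSpace ℝ (Fin n) → EuclideanSpace ℝ (Fin n)) → Prop
  | base (i : Fin d) : IsIteratedBracket X (X i)
  | bracket (Y Z : EuclideanSpace ℝ (Fin n) → EuclideanSpace ℝ (Fin n)) :
      IsIteratedBracket X Y → IsIteratedBracket X Z →
      IsIteratedBracket X (lieBracketVF Y Z)

/-- The family `X₁, …, X_d` is bracket generating. -/
def BracketGenerating {n d : ℕ}
    (X : Fin d → EuclideanSpace ℝ (Fin n) → EuclideanSpace ℝ (Fin n)) : Prop :=
  ∀ x : EuclideanSpace ℝ (Fin n),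
    Submodule.span ℝ {v | ∃ Y, IsIteratedBracket X Y ∧ Y x = v} = ⊤

/-- Trajectory on `[0,1]` of a control `u` starting at `x` for the affine control
system `γ' = X₀(γ) + Σᵢ uᵢ Xᵢ(γ)`. -/
def IsTrajectory {n d : ℕ}
    (X0 : EuclideanSpace ℝ (Fin n) → EuclideanSpace ℝ (Fin n))
    (X : Fin d → EuclideanSpace ℝ (Fin n) → EuclideanSpace ℝ (Fin n))
    (x : EuclideanSpace ℝ (Fin n))
    (u : ℝ → EuclideanSpace ℝ (Fin d))
    (γ : ℝ → EuclideanSpace ℝ (Fin n)) : Prop :=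
  ContinuousOn γ (Set.Icc 0 1) ∧
    ∀ t ∈ Set.Icc (0:ℝ) 1,
      γ t = x + ∫ s in (0:ℝ)..t, (X0 (γ s) + ∑ i, u s i • X i (γ s))

/-!
The iterated brackets of `X₁, …, X_d` yield, near each point, controls of the driftless system that
steer to a nearby target, depend continuously on it, and have norm at most a constant times
`dist ^ N⁻¹`. Running such a control during `[0, τ]` instead of `[0, 1]` multiplies its `L^p` norm
by `τ ^ (p⁻¹ - 1)`. With `τ` comparable to the distance the cost is `dist ^ (N⁻¹ + p⁻¹ - 1)`, which
tends to `0` with the distance as soon as `p < N / (N - 1)`; the drift acting during `[0, τ]` only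
changes the target by `O(τ)`.

Given a control `u` and a prescribed endpoint `y`, pull `y` back along the flow of `u`, steer to the
resulting point in time `τ`, and run `u`, sped up, in the remaining time. Choosing `τ` to vary
continuously with `(u, y)` and to vanish exactly when `F_p(u) = y` gives a continuous `σ` with
`F_p(σ(u, y)) = y` and `σ(u, F_p(u)) = u`. The lift is then `(z, s) ↦ σ(g̃₀(z), g(z, s))`.
-/

namespace EndpointMap

universe u

open scoped ENNReal NNReal

/-! ### Smooth dependence of fixed points -/

section Superposition

variable {α : Type*} [TopologicalSpace α] [CompactSpace α]
variable {A B C : Type*} [NormedAddCommGroup A] [NormedSpace ℝ A]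
  [NormedAddCommGroup B] [NormedSpace ℝ B] [NormedAddCommGroup C] [NormedSpace ℝ C]
variable {E F : Type u} [NormedAddCommGroup E] [NormedSpace ℝ E]
  [NormedAddCommGroup F] [NormedSpace ℝ F]

/-- A continuous bilinear map applied pointwise to continuous functions on a compact space. -/
def pointwiseBilin (L : A →L[ℝ] B →L[ℝ] C) : C(α, A) →L[ℝ] C(α, B) →L[ℝ] C(α, C) :=
  LinearMap.mkContinuous₂
    (LinearMap.mk₂ ℝ (fun (a : C(α, A)) (b : C(α, B)) ↦
      (⟨fun t ↦ L (a t) (b t), by fun_prop⟩ : C(α, C)))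
      (by intros; ext; simp) (by intros; ext; simp) (by intros; ext; simp) (by intros; ext; simp))
    ‖L‖ fun a b ↦ by
      refine (ContinuousMap.norm_le _ (by positivity)).2 fun t ↦ (L.le_opNorm₂ _ _).trans ?_
      gcongr
      · exact a.norm_coe_le_norm t
      · exact b.norm_coe_le_norm t

@[simp]
theorem pointwiseBilin_apply (L : A →L[ℝ] B →L[ℝ] C) (a : C(α, A)) (b : C(α, B)) (t : α) :
    pointwiseBilin L a b t = L (a t) (b t) :=
  rfl

theorem hasFDerivAt_continuousMap_comp {f : C(E, F)} {f' : C(E, E →L[ℝ] F)}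
    (hf : ∀ y, HasFDerivAt f (f' y) y) (γ : C(α, E)) :
    HasFDerivAt (fun η : C(α, E) ↦ f.comp η)
      (pointwiseBilin (ContinuousLinearMap.id ℝ (E →L[ℝ] F)) (f'.comp γ)) γ := by
  rw [hasFDerivAt_iff_isLittleO_nhds_zero, Asymptotics.isLittleO_iff]
  intro c hc
  obtain ⟨δ, hδ, hclose⟩ := Metric.mem_uniformity_dist.1
    ((isCompact_range γ.continuous).uniformContinuousAt_of_continuousAt f'
      (fun y _ ↦ f'.continuous.continuousAt) (Metric.dist_mem_uniformity hc))
  filter_upwards [Metric.ball_mem_nhds (0 : C(α, E)) hδ] with η hη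
  rw [mem_ball_zero_iff] at hη
  refine (ContinuousMap.norm_le _ (by positivity)).2 fun t ↦ ?_
  have hηt : ‖η t‖ ≤ ‖η‖ := η.norm_coe_le_norm t
  have hmean : ‖f (γ t + η t) - f (γ t) - f' (γ t) (γ t + η t - γ t)‖
      ≤ c * ‖γ t + η t - γ t‖ :=
    (convex_ball (γ t) δ).norm_image_sub_le_of_norm_hasFDerivWithin_le'
      (fun z _ ↦ (hf z).hasFDerivWithinAt)
      (fun z hz ↦ by
        have : dist (f' (γ t)) (f' z) < c :=
          @hclose (γ t) z (by rwa [dist_comm]) (mem_range_self t)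
        rw [dist_comm, dist_eq_norm] at this
        exact this.le)
      (Metric.mem_ball_self hδ) (by simpa using hηt.trans_lt hη)
  rw [add_sub_cancel_left] at hmean
  exact hmean.trans (by gcongr)

theorem contDiff_nat_continuousMap_comp (n : ℕ) :
    ∀ {F : Type u} [NormedAddCommGroup F] [NormedSpace ℝ F] {f : C(E, F)},
      ContDiff ℝ n f → ContDiff ℝ n (fun γ : C(α, E) ↦ f.comp γ) := by
  induction n with
  | zero =>
    intro F _ _ f _
    rw [Nat.cast_zero, contDiff_zero]
    exact f.continuous_postcomp
  | succ n ih =>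
    intro F _ _ f hf
    have hf1 : ContDiff ℝ 1 f := hf.of_le (by norm_cast; omega)
    have hf' : ContDiff ℝ n (fderiv ℝ f) := hf.fderiv_right (by norm_cast)
    let f' : C(E, E →L[ℝ] F) := ⟨fderiv ℝ f, hf'.continuous⟩
    push_cast
    rw [contDiff_succ_iff_hasFDerivAt]
    exact ⟨fun γ ↦ pointwiseBilin (ContinuousLinearMap.id ℝ (E →L[ℝ] F)) (f'.comp γ),
      (ContinuousLinearMap.contDiff _).comp (ih (f := f') hf'), fun γ ↦
      hasFDerivAt_continuousMap_comp
        (fun y ↦ (hf1.differentiable one_ne_zero y).hasFDerivAt) γ⟩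

theorem contDiff_continuousMap_comp {f : C(E, F)} (hf : ContDiff ℝ (⊤ : ℕ∞) f) :
    ContDiff ℝ (⊤ : ℕ∞) (fun γ : C(α, E) ↦ f.comp γ) :=
  contDiff_infty.2 fun n ↦
    contDiff_nat_continuousMap_comp n (hf.of_le (by exact_mod_cast le_top))

end Superposition

section FixedPoint

variable {P C : Type*} [NormedAddCommGroup P] [NormedSpace ℝ P]
  [NormedAddCommGroup C] [NormedSpace ℝ C] [CompleteSpace C]

theorem existsUnique_fixedPoint_of_conj {f : C → C} {e : C ≃L[ℝ] C} {K : NNReal}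
    (hf : ContractingWith K (e.symm ∘ f ∘ e)) : ∃! y, f y = y := by
  refine ⟨e (hf.fixedPoint _), ?_, fun y hy ↦ ?_⟩
  · have := congrArg e hf.fixedPoint_isFixedPt
    simpa using this
  · have : Function.IsFixedPt (e.symm ∘ f ∘ e) (e.symm y) := by
      simp [Function.IsFixedPt, hy]
    rw [← hf.fixedPoint_unique this, e.apply_symm_apply]

theorem isInvertible_one_sub_of_conj (e : C ≃L[ℝ] C) {D : C →L[ℝ] C}
    (hD : ‖(e.symm : C →L[ℝ] C) ∘L D ∘L (e : C →L[ℝ] C)‖ < 1) : (1 - D).IsInvertible := by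
  have hconj : (1 - D) = (e : C →L[ℝ] C) ∘L
      (1 - (e.symm : C →L[ℝ] C) ∘L D ∘L (e : C →L[ℝ] C)) ∘L (e.symm : C →L[ℝ] C) := by
    ext y; simp
  rw [hconj, ContinuousLinearMap.isInvertible_equiv_comp,
    ContinuousLinearMap.isInvertible_comp_equiv]
  obtain ⟨v, hv⟩ := isUnit_one_sub_of_norm_lt_one hD
  rw [← hv]
  exact ContinuousLinearMap.isInvertible_equiv (f := ContinuousLinearEquiv.ofUnit v)

/-- The linearisation of `y ↦ y - T (q, y)` at a fixed point is `1 - D` with `D` conjugate to an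
operator of norm `< 1`, so the implicit function theorem applies. -/
theorem contDiff_fixedPoint_of_conj [CompleteSpace P] {n : WithTop ℕ∞} (hn : n ≠ 0)
    {T : P × C → C} (hT : ContDiff ℝ n T) {e : P → C ≃L[ℝ] C} {K : P → NNReal}
    (hcontr : ∀ q, ContractingWith (K q) ((e q).symm ∘ (fun y ↦ T (q, y)) ∘ e q))
    {s : P → C} (hs : ∀ q, T (q, s q) = s q) : ContDiff ℝ n s := by
  rw [contDiff_iff_contDiffAt]
  intro q
  have hΦ : ContDiff ℝ n (fun z : P × C ↦ z.2 - T z) := contDiff_snd.sub hT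
  set D : C →L[ℝ] C := fderiv ℝ T (q, s q) ∘L .inr ℝ P C
  have hTd : HasFDerivAt T (fderiv ℝ T (q, s q)) (q, s q) :=
    (hT.differentiable hn _).hasFDerivAt
  have hD : HasFDerivAt (fun y ↦ T (q, y)) D (s q) :=
    hTd.comp (s q) (hasFDerivAt_prodMk_right q (s q))
  have hDnorm : ‖((e q).symm : C →L[ℝ] C) ∘L D ∘L (e q : C →L[ℝ] C)‖ < 1 := by
    rw [← (e q).apply_symm_apply (s q)] at hD
    have hconj := (e q).symm.hasFDerivAt.comp _ (hD.comp _ (e q).hasFDerivAt)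
    rw [← hconj.fderiv]
    exact (norm_fderiv_le_of_lipschitz ℝ (hcontr q).toLipschitzWith).trans_lt (hcontr q).1
  have hinv : (fderiv ℝ (fun z : P × C ↦ z.2 - T z) (q, s q) ∘L .inr ℝ P C).IsInvertible := by
    have hd : HasFDerivAt (fun z : P × C ↦ z.2 - T z) _ (q, s q) := hasFDerivAt_snd.sub hTd
    rw [hd.fderiv, ContinuousLinearMap.sub_comp]
    exact isInvertible_one_sub_of_conj (e q) hDnorm
  have hΦat : ContDiffAt ℝ n (fun z : P × C ↦ z.2 - T z) (q, s q) := hΦ.contDiffAt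
  refine (hΦat.contDiffAt_implicitFunction hn hinv).congr_of_eventuallyEq ?_
  filter_upwards [hΦat.eventually_apply_implicitFunction hn hinv] with r hr
  simp only [hs, sub_self] at hr
  exact (existsUnique_fixedPoint_of_conj (hcontr r)).unique (hs r) (sub_eq_zero.1 hr).symm

end FixedPoint

section ExponentialWeight

theorem integral_exp_mul_le {lam t : ℝ} (hlam : 0 < lam) :
    ∫ s in (0 : ℝ)..t, Real.exp (lam * s) ≤ Real.exp (lam * t) / lam := by
  rw [intervalIntegral.integral_comp_mul_left Real.exp hlam.ne', integral_exp, smul_eq_mul,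
    mul_zero, Real.exp_zero, div_eq_inv_mul]
  gcongr
  exact sub_le_self _ zero_le_one

/-- Write `k` as a bounded function plus one with integral at most `1/4`: the weight `exp (λ t)`
absorbs the bounded part for large `λ`. -/
theorem exists_exp_weight {k : ℝ → ℝ} (hk : IntegrableOn k (Icc 0 1)) :
    ∃ lam : ℝ, ∀ t ∈ Icc (0 : ℝ) 1,
      ∫ s in (0 : ℝ)..t, k s * Real.exp (lam * s) ≤ Real.exp (lam * t) / 2 := by
  obtain ⟨g, hg, hgint⟩ := hk.exists_boundedContinuous_integral_sub_le
    (ε := 1 / 4) (by norm_num)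
  set lam : ℝ := 4 * (‖g‖ + 1)
  have hlam : 0 < lam := by positivity
  refine ⟨lam, fun t ht ↦ ?_⟩
  have hsub : Ioc 0 t ⊆ Icc (0 : ℝ) 1 := fun s hs ↦ ⟨hs.1.le, hs.2.trans ht.2⟩
  have hii {f : ℝ → ℝ} (hf : IntegrableOn f (Icc 0 1)) : IntervalIntegrable f volume 0 t :=
    (intervalIntegrable_iff_integrableOn_Ioc_of_le ht.1).2 (hf.mono_set hsub)
  have hexp : Continuous fun s : ℝ ↦ Real.exp (lam * s) := by fun_prop
  have hrem : IntegrableOn (fun s ↦ ‖k s - g s‖) (Icc 0 1) := (hk.sub hgint).norm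
  have hremle : ∫ s in (0 : ℝ)..t, ‖k s - g s‖ ≤ 1 / 4 := by
    rw [intervalIntegral.integral_of_le ht.1]
    exact (setIntegral_mono_set hrem (Eventually.of_forall fun s ↦ norm_nonneg _)
      hsub.eventuallyLE).trans hg
  calc ∫ s in (0 : ℝ)..t, k s * Real.exp (lam * s)
      ≤ ∫ s in (0 : ℝ)..t, (‖g‖ * Real.exp (lam * s) + ‖k s - g s‖ * Real.exp (lam * t)) := by
        refine intervalIntegral.integral_mono_on ht.1
          ((hii hk).mul_continuousOn hexp.continuousOn)
          (((hexp.intervalIntegrable _ _).const_mul _).add ((hii hrem).mul_const _))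
          fun s hs ↦ ?_
        have hst : Real.exp (lam * s) ≤ Real.exp (lam * t) := by gcongr; exact hs.2
        have hks : k s ≤ ‖g‖ + ‖k s - g s‖ := by
          have h1 := (Real.le_norm_self _).trans (g.norm_coe_le_norm s)
          have h2 := Real.le_norm_self (k s - g s)
          linarith
        calc k s * Real.exp (lam * s) ≤ (‖g‖ + ‖k s - g s‖) * Real.exp (lam * s) := by gcongr
          _ ≤ _ := by rw [add_mul]; gcongr
    _ = ‖g‖ * (∫ s in (0 : ℝ)..t, Real.exp (lam * s))
          + (∫ s in (0 : ℝ)..t, ‖k s - g s‖) * Real.exp (lam * t) := by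
        rw [intervalIntegral.integral_add ((hexp.intervalIntegrable _ _).const_mul _)
          ((hii hrem).mul_const _), intervalIntegral.integral_const_mul,
          intervalIntegral.integral_mul_const]
    _ ≤ ‖g‖ * (Real.exp (lam * t) / lam) + 1 / 4 * Real.exp (lam * t) := by
        gcongr
        exact integral_exp_mul_le hlam
    _ ≤ Real.exp (lam * t) / 2 := by
        have hle : ‖g‖ / lam ≤ 1 / 4 := by
          rw [div_le_div_iff₀ hlam (by norm_num)]; simp only [lam]; linarith
        nlinarith [Real.exp_pos (lam * t), hle,
          mul_le_mul_of_nonneg_right hle (Real.exp_pos (lam * t)).le,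
          show ‖g‖ * (Real.exp (lam * t) / lam) = ‖g‖ / lam * Real.exp (lam * t) by ring]

variable {E : Type*} [NormedAddCommGroup E] [NormedSpace ℝ E]

/-- Multiplication of paths on `[0,1]` by the weight `t ↦ exp (λ t)`. -/
def expWeight (lam : ℝ) : C(unitInterval, E) ≃L[ℝ] C(unitInterval, E) :=
  .equivOfInverse
    (pointwiseBilin (ContinuousLinearMap.lsmul ℝ ℝ) ⟨fun t ↦ Real.exp (lam * t), by fun_prop⟩)
    (pointwiseBilin (ContinuousLinearMap.lsmul ℝ ℝ) ⟨fun t ↦ Real.exp (-(lam * t)), by fun_prop⟩)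
    (fun γ ↦ by ext t; simp [smul_smul, ← Real.exp_add])
    (fun γ ↦ by ext t; simp [smul_smul, ← Real.exp_add])

@[simp]
theorem expWeight_apply (lam : ℝ) (γ : C(unitInterval, E)) (t : unitInterval) :
    expWeight lam γ t = Real.exp (lam * t) • γ t :=
  rfl

@[simp]
theorem expWeight_symm_apply (lam : ℝ) (γ : C(unitInterval, E)) (t : unitInterval) :
    (expWeight lam).symm γ t = Real.exp (-(lam * t)) • γ t :=
  rfl

end ExponentialWeight

/-! ### Trajectories of control systems -/

/-- The space `L^p([0,1], V)` of controls. -/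
abbrev Control (p : ℝ≥0∞) (V : Type*) [NormedAddCommGroup V] : Type _ :=
  Lp V p (volume.restrict (Icc (0 : ℝ) 1))

instance : IsProbabilityMeasure (volume.restrict (Icc (0 : ℝ) 1)) :=
  ⟨by simp⟩

section ControlIntegral

variable {p : ℝ≥0∞} [hp : Fact (1 ≤ p)]
variable {V E : Type*} [NormedAddCommGroup V] [NormedAddCommGroup E]

theorem integrableOn_control (w : Control p V) : IntegrableOn w (Icc 0 1) :=
  (Lp.memLp w).integrable hp.out

theorem integral_norm_control_le (w : Control p V) : ∫ s in Icc (0 : ℝ) 1, ‖w s‖ ≤ ‖w‖ := by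
  have hw := (Lp.memLp w).aestronglyMeasurable
  rw [integral_norm_eq_lintegral_enorm hw, ← eLpNorm_one_eq_lintegral_enorm, Lp.norm_def]
  exact ENNReal.toReal_mono (Lp.memLp w).eLpNorm_ne_top
    (eLpNorm_le_eLpNorm_of_exponent_le hp.out hw)

theorem intervalIntegrable_of_mem_Icc {f : ℝ → E} (hf : IntegrableOn f (Icc 0 1)) {a b : ℝ}
    (ha : a ∈ Icc (0 : ℝ) 1) (hb : b ∈ Icc (0 : ℝ) 1) : IntervalIntegrable f volume a b :=
  (hf.mono_set (uIcc_subset_Icc ha hb)).intervalIntegrable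

variable [NormedSpace ℝ V] [NormedSpace ℝ E]

theorem intervalIntegral_congr_of_mem_Icc {f g : ℝ → E}
    (hfg : f =ᵐ[volume.restrict (Icc 0 1)] g) {a b : ℝ}
    (ha : a ∈ Icc (0 : ℝ) 1) (hb : b ∈ Icc (0 : ℝ) 1) :
    ∫ s in a..b, f s = ∫ s in a..b, g s :=
  intervalIntegral.integral_congr_ae_restrict <|
    ae_restrict_of_ae_restrict_of_subset (uIoc_subset_uIcc.trans (uIcc_subset_Icc ha hb)) hfg

/-- The primitive `t ↦ ∫₀ᵗ w` of a control. -/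
def primitive : Control p V →L[ℝ] C(unitInterval, V) :=
  LinearMap.mkContinuous
    { toFun w := ⟨fun t ↦ ∫ s in (0 : ℝ)..t, w s, by
        have h := intervalIntegral.continuousOn_primitive_interval (a := (0 : ℝ)) (b := 1)
          (f := w) (μ := volume)
        rw [uIcc_of_le zero_le_one] at h
        exact continuousOn_iff_continuous_domRestrict.1 (h (integrableOn_control w))⟩
      map_add' w w' := by
        ext t
        refine (intervalIntegral_congr_of_mem_Icc (Lp.coeFn_add w w') unitInterval.zero_mem
          t.2).trans (intervalIntegral.integral_add ?_ ?_) <;>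
        exact intervalIntegrable_of_mem_Icc (integrableOn_control _) unitInterval.zero_mem t.2
      map_smul' c w := by
        ext t
        exact (intervalIntegral_congr_of_mem_Icc (Lp.coeFn_smul c w) unitInterval.zero_mem
          t.2).trans (intervalIntegral.integral_smul c _) }
    1 fun w ↦ (ContinuousMap.norm_le _ (by positivity)).2 fun t ↦ by
      rw [one_mul]
      refine (intervalIntegral.norm_integral_le_integral_norm t.2.1).trans ?_
      rw [intervalIntegral.integral_of_le t.2.1]
      exact (setIntegral_mono_set (integrableOn_control w).norm
        (Eventually.of_forall fun s ↦ norm_nonneg _)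
        (show Ioc 0 (t : ℝ) ⊆ Icc 0 1 from fun s hs ↦
          ⟨hs.1.le, hs.2.trans t.2.2⟩).eventuallyLE).trans (integral_norm_control_le w)

theorem primitive_apply (w : Control p V) (t : unitInterval) :
    primitive w t = ∫ s in (0 : ℝ)..t, w s :=
  rfl

variable (p) in
/-- A path on `[0,1]`, extended by constants to `ℝ`, as an element of `L^p`. -/
def pathToLp : C(unitInterval, E) →L[ℝ] Control p E :=
  BoundedContinuousFunction.toLp p _ ℝ ∘L LinearMap.mkContinuous
    { toFun γ := (BoundedContinuousFunction.mkOfCompact γ).compContinuous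
        ⟨projIcc 0 1 zero_le_one, continuous_projIcc⟩
      map_add' _ _ := rfl
      map_smul' _ _ := rfl }
    1 fun γ ↦ by
      rw [one_mul]
      exact BoundedContinuousFunction.norm_compContinuous_le _ _

theorem coeFn_pathToLp (γ : C(unitInterval, E)) :
    pathToLp p γ =ᵐ[volume.restrict (Icc 0 1)] fun s ↦ γ (projIcc 0 1 zero_le_one s) :=
  BoundedContinuousFunction.coeFn_toLp p _ ℝ _

/-- The bilinear map `(A, w) ↦ (t ↦ ∫₀ᵗ A(s) w(s) ds)`. -/
def controlIntegral :
    C(unitInterval, V →L[ℝ] E) →L[ℝ] Control p V →L[ℝ] C(unitInterval, E) :=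
  ContinuousLinearMap.compL ℝ (Control p V) (Control p E) C(unitInterval, E) primitive ∘L
    ContinuousLinearMap.holderL _ ∞ p p (ContinuousLinearMap.id ℝ (V →L[ℝ] E)) ∘L pathToLp ∞

theorem controlIntegral_apply (A : C(unitInterval, V →L[ℝ] E)) (w : Control p V)
    (t : unitInterval) :
    controlIntegral A w t = ∫ s in (0 : ℝ)..t, A (projIcc 0 1 zero_le_one s) (w s) := by
  refine intervalIntegral_congr_of_mem_Icc ?_ unitInterval.zero_mem t.2
  filter_upwards [ContinuousLinearMap.coeFn_holder (r := p)
    (ContinuousLinearMap.id ℝ (V →L[ℝ] E)) (pathToLp ∞ A) w, coeFn_pathToLp (p := ∞) A] with s hs hA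
  exact hs.trans (by rw [hA]; rfl)

theorem norm_controlIntegral_apply_le {A : C(unitInterval, V →L[ℝ] E)} {g : ℝ → ℝ}
    (hg : Continuous g) (hA : ∀ t, ‖A t‖ ≤ g t) (w : Control p V) (t : unitInterval) :
    ‖controlIntegral A w t‖ ≤ ∫ s in (0 : ℝ)..t, ‖w s‖ * g s := by
  rw [controlIntegral_apply]
  refine intervalIntegral.norm_integral_le_of_norm_le t.2.1 (Eventually.of_forall fun s hs ↦ ?_)
    ((intervalIntegrable_of_mem_Icc (integrableOn_control w).norm unitInterval.zero_mem
      t.2).mul_continuousOn hg.continuousOn)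
  have hs' : s ∈ Icc (0 : ℝ) 1 := ⟨hs.1.le, hs.2.trans t.2.2⟩
  rw [projIcc_of_mem _ hs', mul_comm]
  exact (ContinuousLinearMap.le_opNorm _ _).trans (by gcongr; exact hA ⟨s, hs'⟩)

end ControlIntegral

/-- A control system `γ' = X(γ) w` that is linear in the control `w`, with smooth and globally
Lipschitz right-hand side. -/
structure ControlSystem (W E : Type u) [NormedAddCommGroup W] [NormedSpace ℝ W]
    [NormedAddCommGroup E] [NormedSpace ℝ E] where
  field : E → W →L[ℝ] E
  smooth : ContDiff ℝ (⊤ : ℕ∞) field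
  lipConst : NNReal
  lipschitz : LipschitzWith lipConst field

namespace ControlSystem

variable {W E : Type u} [NormedAddCommGroup W] [NormedSpace ℝ W]
  [NormedAddCommGroup E] [NormedSpace ℝ E] (X : ControlSystem W E)

/-- `γ` is a trajectory on `[0,1]` of the system driven by the control `w`, starting at `y`. -/
def IsSolution (w : ℝ → W) (y : E) (γ : ℝ → E) : Prop :=
  ContinuousOn γ (Icc 0 1) ∧
    ∀ t ∈ Icc (0 : ℝ) 1, γ t = y + ∫ s in (0 : ℝ)..t, X.field (γ s) (w s)

variable {X} {w w' : ℝ → W} {y : E} {γ : ℝ → E}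

theorem IsSolution.zero (h : X.IsSolution w y γ) : γ 0 = y := by
  simpa using h.2 0 unitInterval.zero_mem

theorem IsSolution.congr_ae (h : X.IsSolution w y γ)
    (hw : w =ᵐ[volume.restrict (Icc 0 1)] w') : X.IsSolution w' y γ := by
  refine ⟨h.1, fun t ht ↦ (h.2 t ht).trans ?_⟩
  congr 1
  refine intervalIntegral_congr_of_mem_Icc ?_ unitInterval.zero_mem ht
  filter_upwards [hw] with s hs
  rw [hs]

theorem IsSolution.integrableOn (h : X.IsSolution w y γ) (hw : IntegrableOn w (Icc 0 1)) :
    IntegrableOn (fun s ↦ X.field (γ s) (w s)) (Icc 0 1) := by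
  have hcont : ContinuousOn (fun s ↦ X.field (γ s)) (Icc 0 1) :=
    X.smooth.continuous.comp_continuousOn h.1
  obtain ⟨M, hM⟩ := isCompact_Icc.exists_bound_of_continuousOn hcont
  refine (hw.norm.const_mul M).mono' ?_ ?_
  · exact (ContinuousLinearMap.id ℝ (W →L[ℝ] E)).aestronglyMeasurable_comp₂
      (hcont.aestronglyMeasurable measurableSet_Icc) hw.aestronglyMeasurable
  · filter_upwards [ae_restrict_mem measurableSet_Icc] with s hs
    exact (ContinuousLinearMap.le_opNorm _ _).trans (by gcongr; exact hM s hs)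

theorem IsSolution.affine (h : X.IsSolution w y γ) (hw : IntegrableOn w (Icc 0 1)) {a c : ℝ}
    (hac : ∀ t ∈ Icc (0 : ℝ) 1, a + c * t ∈ Icc (0 : ℝ) 1) :
    X.IsSolution (fun t ↦ c • w (a + c * t)) (γ a) (fun t ↦ γ (a + c * t)) := by
  have ha : a ∈ Icc (0 : ℝ) 1 := by simpa using hac 0 unitInterval.zero_mem
  refine ⟨h.1.comp (by fun_prop) hac, fun t ht ↦ ?_⟩
  have hint := h.integrableOn hw
  beta_reduce
  rw [h.2 _ (hac t ht), h.2 a ha, add_assoc]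
  congr 1
  rw [← intervalIntegral.integral_add_adjacent_intervals
    (intervalIntegrable_of_mem_Icc hint unitInterval.zero_mem ha)
    (intervalIntegrable_of_mem_Icc hint ha (hac t ht))]
  congr 1
  simp only [map_smul, intervalIntegral.integral_smul]
  rw [intervalIntegral.smul_integral_comp_add_mul (fun s ↦ X.field (γ s) (w s)), mul_zero,
    add_zero]

variable (X)
variable {p : ℝ≥0∞} [hp : Fact (1 ≤ p)]

/-- The right-hand side of the integral equation for the trajectory of `q.1.1` from `q.1.2`. -/
def picard (q : (Control p W × E) × C(unitInterval, E)) : C(unitInterval, E) :=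
  ContinuousMap.const _ q.1.2 +
    controlIntegral ((⟨X.field, X.smooth.continuous⟩ : C(E, W →L[ℝ] E)).comp q.2) q.1.1

theorem picard_apply (w : Control p W) (y : E) (γ : C(unitInterval, E)) (t : unitInterval) :
    X.picard ((w, y), γ) t =
      y + ∫ s in (0 : ℝ)..t, X.field (γ (projIcc 0 1 zero_le_one s)) (w s) := by
  simp [picard, controlIntegral_apply]

theorem contDiff_picard : ContDiff ℝ (⊤ : ℕ∞) (X.picard (p := p)) := by
  have hfield : ContDiff ℝ (⊤ : ℕ∞) fun γ : C(unitInterval, E) ↦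
      (⟨X.field, X.smooth.continuous⟩ : C(E, W →L[ℝ] E)).comp γ :=
    contDiff_continuousMap_comp X.smooth
  have hconst : ContDiff ℝ (⊤ : ℕ∞) fun y : E ↦ ContinuousMap.const unitInterval y :=
    (ContinuousLinearMap.const ℝ unitInterval (M := E)).contDiff
  exact (hconst.comp (contDiff_snd.comp contDiff_fst)).add
    (controlIntegral.isBoundedBilinearMap.contDiff.comp
      ((hfield.comp contDiff_snd).prodMk (contDiff_fst.comp contDiff_fst)))

theorem exists_contractingWith_picard (q : Control p W × E) :
    ∃ e : C(unitInterval, E) ≃L[ℝ] C(unitInterval, E),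
      ContractingWith (1 / 2) (e.symm ∘ (fun γ ↦ X.picard (q, γ)) ∘ e) := by
  obtain ⟨lam, hlam⟩ :=
    exists_exp_weight ((integrableOn_control q.1).norm.const_mul (X.lipConst : ℝ))
  refine ⟨expWeight lam, by rw [← NNReal.coe_lt_coe]; norm_num,
    LipschitzWith.of_dist_le_mul fun η η' ↦ ?_⟩
  rw [dist_eq_norm, dist_eq_norm]
  refine (ContinuousMap.norm_le _ (by positivity)).2 fun t ↦ ?_
  let Y : C(E, W →L[ℝ] E) := ⟨X.field, X.smooth.continuous⟩
  set A : C(unitInterval, W →L[ℝ] E) := Y.comp (expWeight lam η) - Y.comp (expWeight lam η')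
  have hA (s : unitInterval) : ‖A s‖ ≤ X.lipConst * (Real.exp (lam * s) * ‖η - η'‖) := by
    refine (X.lipschitz.norm_sub_le _ _).trans ?_
    rw [expWeight_apply, expWeight_apply, ← smul_sub, norm_smul,
      Real.norm_of_nonneg (by positivity)]
    gcongr
    exact (η - η').norm_coe_le_norm s
  have hAint : ‖controlIntegral A q.1 t‖ ≤ Real.exp (lam * t) / 2 * ‖η - η'‖ :=
    calc _ ≤ ∫ s in (0 : ℝ)..t, ‖q.1 s‖ * (X.lipConst * (Real.exp (lam * s) * ‖η - η'‖)) :=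
          norm_controlIntegral_apply_le (by fun_prop) hA q.1 t
      _ = (∫ s in (0 : ℝ)..t, X.lipConst * ‖q.1 s‖ * Real.exp (lam * s)) * ‖η - η'‖ := by
          rw [← intervalIntegral.integral_mul_const]
          congr 1; ext s; ring
      _ ≤ _ := by gcongr; exact hlam t t.2
  have hdiff : ((expWeight lam).symm (X.picard (q, expWeight lam η)) -
      (expWeight lam).symm (X.picard (q, expWeight lam η'))) t =
        Real.exp (-(lam * t)) • controlIntegral A q.1 t := by
    simp only [picard, A, Y, map_sub, map_add, ContinuousMap.sub_apply,
      _root_.sub_apply, expWeight_symm_apply, smul_sub, add_sub_add_left_eq_sub]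
  change ‖((expWeight lam).symm (X.picard (q, expWeight lam η)) -
      (expWeight lam).symm (X.picard (q, expWeight lam η'))) t‖ ≤ _
  rw [hdiff, norm_smul, Real.norm_of_nonneg (by positivity)]
  calc _ ≤ Real.exp (-(lam * t)) * (Real.exp (lam * t) / 2 * ‖η - η'‖) := by gcongr
    _ = (Real.exp (-(lam * t)) * Real.exp (lam * t)) / 2 * ‖η - η'‖ := by ring
    _ = _ := by rw [← Real.exp_add]; simp

variable [CompleteSpace E]

theorem existsUnique_picard (q : Control p W × E) : ∃! γ, X.picard (q, γ) = γ :=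
  (X.exists_contractingWith_picard q).elim fun _ ↦ existsUnique_fixedPoint_of_conj

/-- The trajectory of a control from a given point. -/
def traj (q : Control p W × E) : C(unitInterval, E) :=
  (X.existsUnique_picard q).choose

theorem picard_traj (q : Control p W × E) : X.picard (q, X.traj q) = X.traj q :=
  (X.existsUnique_picard q).choose_spec.1

theorem contDiff_traj [CompleteSpace W] : ContDiff ℝ (⊤ : ℕ∞) (X.traj (p := p)) := by
  choose e he using X.exists_contractingWith_picard (p := p)
  exact contDiff_fixedPoint_of_conj (by simp) X.contDiff_picard he X.picard_traj

theorem isSolution_traj (w : Control p W) (y : E) :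
    X.IsSolution w y fun t ↦ X.traj (w, y) (projIcc 0 1 zero_le_one t) := by
  refine ⟨(by fun_prop : Continuous _).continuousOn, fun t ht ↦ ?_⟩
  have h := X.picard_apply w y (X.traj (w, y)) ⟨t, ht⟩
  rw [picard_traj] at h
  simpa only [projIcc_of_mem _ ht] using h

/-- The endpoint of the trajectory of a control from a given point. -/
def endpoint (w : Control p W) (y : E) : E :=
  X.traj (w, y) 1

theorem contDiff_endpoint [CompleteSpace W] :
    ContDiff ℝ (⊤ : ℕ∞) fun q : Control p W × E ↦ X.endpoint q.1 q.2 :=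
  (ContinuousMap.evalCLM ℝ (1 : unitInterval)).contDiff.comp X.contDiff_traj

variable {X} in
theorem IsSolution.endpoint_eq {w : Control p W} (h : X.IsSolution w y γ) :
    X.endpoint w y = γ 1 := by
  let γ' : C(unitInterval, E) := ⟨fun t ↦ γ t, continuousOn_iff_continuous_domRestrict.1 h.1⟩
  have hγ' : X.picard ((w, y), γ') = γ' := by
    ext t
    rw [picard_apply]
    refine Eq.trans ?_ (h.2 t t.2).symm
    congr 1
    refine intervalIntegral_congr_of_mem_Icc ?_ unitInterval.zero_mem t.2
    filter_upwards [ae_restrict_mem measurableSet_Icc] with s hs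
    rw [projIcc_of_mem _ hs]
    rfl
  exact congrArg (· 1) ((X.existsUnique_picard (w, y)).unique (X.picard_traj _) hγ')

end ControlSystem

/-! ### Reparametrisation and concatenation of controls -/

theorem continuousAt_apply_of_dense {T A B : Type*} [TopologicalSpace T]
    [NormedAddCommGroup A] [NormedSpace ℝ A] [NormedAddCommGroup B] [NormedSpace ℝ B]
    {L : T → A →L[ℝ] B} {x : T} {M : ℝ} (hM : ∀ᶠ y in 𝓝 x, ‖L y‖ ≤ M) {D : Set A}
    (hD : Dense D) (hL : ∀ f ∈ D, ContinuousAt (fun y ↦ L y f) x) (f : A) :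
    ContinuousAt (fun q : T × A ↦ L q.1 q.2) (x, f) := by
  rw [Metric.continuousAt_iff']
  intro ε hε
  have hM0 : 0 ≤ M := (norm_nonneg _).trans hM.self_of_nhds
  obtain ⟨g, hgD, hg⟩ := hD.exists_dist_lt f (ε := ε / (4 * (M + 1))) (by positivity)
  rw [dist_eq_norm] at hg
  have hf : ∀ᶠ f' in 𝓝 f, ‖f' - g‖ < ε / (4 * (M + 1)) :=
    (continuousAt_id.sub continuousAt_const).norm.eventually_lt continuousAt_const hg
  have hsmall {y : T} {f' : A} (hy : ‖L y‖ ≤ M) (hf' : ‖f' - g‖ < ε / (4 * (M + 1))) :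
      dist (L y f') (L y g) < ε / 4 := by
    rw [dist_eq_norm, ← map_sub]
    calc _ ≤ M * ‖f' - g‖ := (L y).le_of_opNorm_le hy _
      _ ≤ (M + 1) * ‖f' - g‖ := by gcongr; linarith
      _ < (M + 1) * (ε / (4 * (M + 1))) := by gcongr
      _ = ε / 4 := by field_simp
  filter_upwards [(hM.and (Metric.continuousAt_iff'.1 (hL g hgD) (ε / 4) (by positivity))).prod_nhds
    hf] with q hq
  have h₁ := hsmall hq.1.1 hq.2
  have h₂ := hsmall hM.self_of_nhds hg
  have h₃ := dist_triangle4_right (L q.1 q.2) (L x f) (L q.1 g) (L x g)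
  linarith [hq.1.2]

section Reparam

variable {V : Type*} [NormedAddCommGroup V] [NormedSpace ℝ V] {p : ℝ≥0∞} {a c : ℝ}

theorem map_affine_volume (a : ℝ) (hc : c ≠ 0) :
    Measure.map (fun t : ℝ ↦ a + c * t) volume = ENNReal.ofReal |c⁻¹| • volume := by
  rw [show (fun t : ℝ ↦ a + c * t) = (fun t ↦ a + t) ∘ (fun t ↦ c * t) from rfl,
    ← Measure.map_map (by fun_prop) (by fun_prop), Real.map_volume_mul_left hc,
    Measure.map_smul, map_add_left_eq_self]

theorem quasiMeasurePreserving_affine (a : ℝ) (hc : c ≠ 0) :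
    Measure.QuasiMeasurePreserving (fun t : ℝ ↦ a + c * t) volume volume :=
  ⟨by fun_prop, (map_affine_volume a hc).symm ▸ Measure.smul_absolutelyContinuous⟩

theorem eLpNorm_smul_comp_affine_le (a c : ℝ) {f : ℝ → V} (hf : AEStronglyMeasurable f volume) :
    eLpNorm (fun t ↦ c • f (a + c * t)) p (volume.restrict (Icc 0 1)) ≤
      ENNReal.ofReal (|c| * |c⁻¹| ^ (1 / p).toReal) * eLpNorm f p volume := by
  rcases eq_or_ne c 0 with rfl | hc
  · simp
  have hf' : AEStronglyMeasurable f (Measure.map (fun t : ℝ ↦ a + c * t) volume) := by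
    rw [map_affine_volume a hc]
    exact hf.smul_measure _
  refine (eLpNorm_mono_measure _ Measure.restrict_le_self).trans_eq ?_
  change eLpNorm (c • (f ∘ fun t ↦ a + c * t)) p volume = _
  rw [eLpNorm_const_smul, ← eLpNorm_map_measure hf' (by fun_prop), map_affine_volume a hc,
    eLpNorm_smul_measure_of_ne_zero (by simp [hc]), smul_eq_mul, ← mul_assoc,
    ENNReal.ofReal_mul (abs_nonneg _), ENNReal.ofReal_rpow_of_nonneg (abs_nonneg _) (by positivity),
    ← Real.norm_eq_abs c, ofReal_norm]

theorem memLp_smul_comp_affine (a c : ℝ) {f : ℝ → V} (hf : MemLp f p volume) :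
    MemLp (fun t ↦ c • f (a + c * t)) p (volume.restrict (Icc 0 1)) := by
  refine ⟨?_, (eLpNorm_smul_comp_affine_le a c hf.1).trans_lt
    (ENNReal.mul_lt_top ENNReal.ofReal_lt_top hf.2)⟩
  rcases eq_or_ne c 0 with rfl | hc
  · simpa using aestronglyMeasurable_const
  · exact ((hf.1.comp_quasiMeasurePreserving
      (quasiMeasurePreserving_affine a hc)).const_smul c).restrict

theorem ae_smul_comp_affine_congr (a c : ℝ) {f g : ℝ → V} (h : f =ᵐ[volume] g) :
    (fun t ↦ c • f (a + c * t)) =ᵐ[volume.restrict (Icc 0 1)] fun t ↦ c • g (a + c * t) := by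
  refine ae_restrict_of_ae ?_
  rcases eq_or_ne c 0 with rfl | hc
  · simp
  · filter_upwards [(quasiMeasurePreserving_affine a hc).ae h] with t ht
    rw [ht]

theorem ae_comp_affine {P : ℝ → Prop} (h : ∀ᵐ t ∂volume.restrict (Icc 0 1), P t) (hc : c ≠ 0)
    (hac : ∀ t ∈ Icc (0 : ℝ) 1, a + c * t ∈ Icc (0 : ℝ) 1) :
    ∀ᵐ t ∂volume.restrict (Icc 0 1), P (a + c * t) := by
  refine (ae_restrict_iff' measurableSet_Icc).2 ?_
  filter_upwards [(quasiMeasurePreserving_affine a hc).ae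
    ((ae_restrict_iff' measurableSet_Icc).1 h)] with t ht h't
  exact ht (hac t h't)

variable [hp : Fact (1 ≤ p)]

/-- The operator `f ↦ c • f (a + c ·)`, followed by restriction to `[0,1]`. -/
def reparamLine (a c : ℝ) : Lp V p (volume : Measure ℝ) →L[ℝ] Control p V :=
  LinearMap.mkContinuous
    { toFun f := (memLp_smul_comp_affine a c (Lp.memLp f)).toLp
      map_add' f g := by
        rw [← MemLp.toLp_add]
        refine MemLp.toLp_congr _ _ ((ae_smul_comp_affine_congr a c (Lp.coeFn_add f g)).trans ?_)
        exact Eventually.of_forall fun t ↦ smul_add c _ _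
      map_smul' r f := by
        rw [RingHom.id_apply, ← MemLp.toLp_const_smul]
        refine MemLp.toLp_congr _ _ ((ae_smul_comp_affine_congr a c (Lp.coeFn_smul r f)).trans ?_)
        exact Eventually.of_forall fun t ↦ smul_comm c r _ }
    (|c| * |c⁻¹| ^ (1 / p).toReal) fun f ↦ by
      rw [← ENNReal.toReal_ofReal (by positivity : 0 ≤ |c| * |c⁻¹| ^ (1 / p).toReal), Lp.norm_def f,
        ← ENNReal.toReal_mul]
      change ‖(memLp_smul_comp_affine a c (Lp.memLp f)).toLp‖ ≤ _
      rw [Lp.norm_toLp]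
      exact ENNReal.toReal_mono (ENNReal.mul_ne_top ENNReal.ofReal_ne_top (Lp.eLpNorm_ne_top f))
        (eLpNorm_smul_comp_affine_le a c (Lp.memLp f).1)

theorem coeFn_reparamLine (a c : ℝ) (f : Lp V p (volume : Measure ℝ)) :
    reparamLine a c f =ᵐ[volume.restrict (Icc 0 1)] fun t ↦ c • f (a + c * t) :=
  (memLp_smul_comp_affine a c (Lp.memLp f)).coeFn_toLp

theorem norm_reparamLine_apply_le (a c : ℝ) (f : Lp V p (volume : Measure ℝ)) :
    ‖reparamLine a c f‖ ≤ |c| * |c⁻¹| ^ (1 / p).toReal * ‖f‖ :=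
  ContinuousLinearMap.le_of_opNorm_le _ (LinearMap.mkContinuous_norm_le _ (by positivity) _) f

theorem continuousAt_reparamLine (hpt : p ≠ ∞) (a : ℝ) (hc : c ≠ 0)
    (f : Lp V p (volume : Measure ℝ)) :
    ContinuousAt (fun q : (ℝ × ℝ) × Lp V p volume ↦ reparamLine q.1.1 q.1.2 q.2) ((a, c), f) := by
  have hbound : ContinuousAt (fun q : ℝ × ℝ ↦ |q.2| * |q.2⁻¹| ^ (1 / p).toReal) (a, c) :=
    continuousAt_snd.abs.mul <| ContinuousAt.rpow_const
      (ContinuousAt.inv₀ continuousAt_snd hc).abs (Or.inl (by simpa using hc))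
  refine continuousAt_apply_of_dense (L := fun q : ℝ × ℝ ↦ reparamLine q.1 q.2)
    (M := |c| * |c⁻¹| ^ (1 / p).toReal + 1) ?_
    (Lp.boundedContinuousFunction_dense V volume hpt) (fun g hg ↦ ?_) f
  · filter_upwards [hbound.eventually_lt continuousAt_const (lt_add_one _)] with q hq
    exact ContinuousLinearMap.opNorm_le_bound _ (by positivity) fun f ↦
      (norm_reparamLine_apply_le q.1 q.2 f).trans (by gcongr)
  obtain ⟨g', hg'⟩ := Lp.mem_boundedContinuousFunction_iff.1 hg
  have hgg' : g =ᵐ[volume] g' := by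
    rw [← hg']
    exact ContinuousMap.coeFn_toAEEqFun volume g'.toContinuousMap
  let path : C(ℝ × ℝ, C(unitInterval, V)) :=
    ContinuousMap.curry ⟨fun q ↦ q.1.2 • g' (q.1.1 + q.1.2 * q.2), by fun_prop⟩
  have hpath (q : ℝ × ℝ) : reparamLine q.1 q.2 g = pathToLp p (path q) := by
    refine Lp.ext ?_
    filter_upwards [coeFn_reparamLine q.1 q.2 g, coeFn_pathToLp (p := p) (path q),
      ae_smul_comp_affine_congr q.1 q.2 hgg', ae_restrict_mem measurableSet_Icc] with t h₁ h₂ h₃ ht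
    rw [h₁, h₂, h₃, projIcc_of_mem _ ht]
    rfl
  simp only [hpath]
  fun_prop

/-- Extension of a control by zero to the whole line. -/
def zeroExtend : Control p V →L[ℝ] Lp V p (volume : Measure ℝ) :=
  LinearMap.mkContinuous
    { toFun u := ((memLp_indicator_iff_restrict measurableSet_Icc).2 (Lp.memLp u)).toLp
      map_add' u v := by
        rw [← MemLp.toLp_add]
        refine MemLp.toLp_congr _ _ ?_
        rw [← indicator_add']
        exact (ae_eq_restrict_iff_indicator_ae_eq measurableSet_Icc).1 (Lp.coeFn_add u v)
      map_smul' r u := by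
        rw [RingHom.id_apply, ← MemLp.toLp_const_smul]
        refine MemLp.toLp_congr _ _ ?_
        refine EventuallyEq.trans ?_ (indicator_const_smul _ r u).eventuallyEq
        exact (ae_eq_restrict_iff_indicator_ae_eq measurableSet_Icc).1 (Lp.coeFn_smul r u) }
    1 fun u ↦ by
      rw [one_mul, Lp.norm_def u]
      change ‖((memLp_indicator_iff_restrict measurableSet_Icc).2 (Lp.memLp u)).toLp‖ ≤ _
      rw [Lp.norm_toLp, eLpNorm_indicator_eq_eLpNorm_restrict measurableSet_Icc]

theorem coeFn_zeroExtend (u : Control p V) :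
    zeroExtend u =ᵐ[volume] (Icc (0 : ℝ) 1).indicator u :=
  ((memLp_indicator_iff_restrict measurableSet_Icc).2 (Lp.memLp u)).coeFn_toLp

theorem norm_zeroExtend_apply (u : Control p V) : ‖zeroExtend u‖ = ‖u‖ := by
  rw [Lp.norm_def u]
  change ‖((memLp_indicator_iff_restrict measurableSet_Icc).2 (Lp.memLp u)).toLp‖ = _
  rw [Lp.norm_toLp, eLpNorm_indicator_eq_eLpNorm_restrict measurableSet_Icc]

/-- The operator `u ↦ c • u (a + c ·)` on controls, with `u` extended by zero outside `[0,1]`. -/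
def reparam (a c : ℝ) : Control p V →L[ℝ] Control p V :=
  reparamLine a c ∘L zeroExtend

theorem coeFn_reparam (a c : ℝ) (u : Control p V) :
    reparam a c u =ᵐ[volume.restrict (Icc 0 1)]
      fun t ↦ c • (Icc (0 : ℝ) 1).indicator u (a + c * t) :=
  (coeFn_reparamLine a c (zeroExtend u)).trans (ae_smul_comp_affine_congr a c (coeFn_zeroExtend u))

theorem norm_reparam_apply_le (a c : ℝ) (u : Control p V) :
    ‖reparam a c u‖ ≤ |c| * |c⁻¹| ^ (1 / p).toReal * ‖u‖ := by
  rw [← norm_zeroExtend_apply u]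
  exact norm_reparamLine_apply_le a c _

theorem continuousAt_reparam (hpt : p ≠ ∞) (a : ℝ) (hc : c ≠ 0) (u : Control p V) :
    ContinuousAt (fun q : (ℝ × ℝ) × Control p V ↦ reparam q.1.1 q.1.2 q.2) ((a, c), u) := by
  have hext : Continuous fun q : (ℝ × ℝ) × Control p V ↦ (q.1, zeroExtend q.2) := by fun_prop
  simp only [reparam, ContinuousLinearMap.comp_apply]
  exact (continuousAt_reparamLine hpt a hc (zeroExtend u)).comp_of_eq
    (f := fun q : (ℝ × ℝ) × Control p V ↦ (q.1, zeroExtend q.2)) hext.continuousAt rfl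

theorem reparam_zero (a : ℝ) : (reparam a 0 : Control p V →L[ℝ] Control p V) = 0 := by
  ext1 u
  refine Lp.ext ?_
  filter_upwards [coeFn_reparam a 0 u, Lp.coeFn_zero V p (volume.restrict (Icc (0 : ℝ) 1))]
    with t ht hzero
  rw [ht, zero_smul, _root_.zero_apply, hzero, Pi.zero_apply]

theorem reparam_zero_one (u : Control p V) : reparam 0 1 u = u := by
  refine Lp.ext ?_
  filter_upwards [coeFn_reparam 0 1 u, ae_restrict_mem measurableSet_Icc] with t ht hmem
  rw [ht, zero_add, one_mul, one_smul, indicator_of_mem hmem]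

/-- The concatenation of two controls: `q`, run on `[0, τ]`, followed by `u`, run on `[τ, 1]`. For
`τ = 0` the division by zero makes the first part vanish, so that the result is `u`. -/
def concat (τ : ℝ) : Control p V × Control p V →L[ℝ] Control p V :=
  (reparam 0 τ⁻¹).coprod (reparam (-τ / (1 - τ)) (1 - τ)⁻¹)

theorem concat_apply (τ : ℝ) (q u : Control p V) :
    concat τ (q, u) = reparam 0 τ⁻¹ q + reparam (-τ / (1 - τ)) (1 - τ)⁻¹ u :=
  rfl

theorem concat_zero (q u : Control p V) : concat 0 (q, u) = u := by
  simp [concat_apply, reparam_zero, reparam_zero_one]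

theorem coeFn_concat (τ : ℝ) (q u : Control p V) :
    concat τ (q, u) =ᵐ[volume.restrict (Icc 0 1)] fun t ↦
      τ⁻¹ • (Icc (0 : ℝ) 1).indicator q (τ⁻¹ * t) +
        (1 - τ)⁻¹ • (Icc (0 : ℝ) 1).indicator u (-τ / (1 - τ) + (1 - τ)⁻¹ * t) := by
  filter_upwards [Lp.coeFn_add (reparam 0 τ⁻¹ q) (reparam (-τ / (1 - τ)) (1 - τ)⁻¹ u),
    coeFn_reparam 0 τ⁻¹ q, coeFn_reparam (-τ / (1 - τ)) (1 - τ)⁻¹ u] with t h₁ h₂ h₃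
  rw [concat_apply, h₁, Pi.add_apply, h₂, h₃, zero_add]

variable {τ : ℝ}

theorem concat_ae_eq_left (h₀ : 0 < τ) (h₁ : τ < 1) (q u : Control p V) :
    q =ᵐ[volume.restrict (Icc 0 1)] fun t ↦ τ • concat τ (q, u) (0 + τ * t) := by
  have hτ : 0 < 1 - τ := sub_pos.2 h₁
  filter_upwards [ae_comp_affine (a := 0) (coeFn_concat τ q u) h₀.ne'
      fun t ht ↦ ⟨by nlinarith [ht.1], by nlinarith [ht.2]⟩,
    ae_restrict_mem measurableSet_Icc, (measure_eq_zero_iff_ae_notMem (s := {1})).1 (by simp)]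
    with t ht h't ht₁
  have hlt : t < 1 := lt_of_le_of_ne h't.2 ht₁
  have hq : τ⁻¹ * (0 + τ * t) = t := by rw [zero_add, inv_mul_cancel_left₀ h₀.ne']
  have hu : -τ / (1 - τ) + (1 - τ)⁻¹ * (0 + τ * t) ∉ Icc (0 : ℝ) 1 := by
    have : -τ / (1 - τ) + (1 - τ)⁻¹ * (0 + τ * t) = -(τ * (1 - t) / (1 - τ)) := by field_simp; ring
    have : 0 < τ * (1 - t) / (1 - τ) := div_pos (mul_pos h₀ (sub_pos.2 hlt)) hτ
    intro h
    linarith [h.1]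
  rw [ht, hq, indicator_of_mem h't, indicator_of_notMem hu, smul_zero, add_zero,
    smul_inv_smul₀ h₀.ne']

theorem concat_ae_eq_right (h₀ : 0 < τ) (h₁ : τ < 1) (q u : Control p V) :
    u =ᵐ[volume.restrict (Icc 0 1)] fun t ↦ (1 - τ) • concat τ (q, u) (τ + (1 - τ) * t) := by
  have hτ : 0 < 1 - τ := sub_pos.2 h₁
  filter_upwards [ae_comp_affine (a := τ) (coeFn_concat τ q u) hτ.ne'
      fun t ht ↦ ⟨by nlinarith [ht.1], by nlinarith [ht.2]⟩,
    ae_restrict_mem measurableSet_Icc, (measure_eq_zero_iff_ae_notMem (s := {0})).1 (by simp)]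
    with t ht h't ht₀
  have hlt : 0 < t := lt_of_le_of_ne h't.1 (Ne.symm ht₀)
  have hu : -τ / (1 - τ) + (1 - τ)⁻¹ * (τ + (1 - τ) * t) = t := by field_simp; ring
  have hq : τ⁻¹ * (τ + (1 - τ) * t) ∉ Icc (0 : ℝ) 1 := by
    have : τ⁻¹ * (τ + (1 - τ) * t) = 1 + (1 - τ) * t / τ := by field_simp
    have : 0 < (1 - τ) * t / τ := div_pos (mul_pos hτ hlt) h₀
    intro h
    linarith [h.2]
  rw [ht, hu, indicator_of_mem h't, indicator_of_notMem hq, smul_zero, zero_add,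
    smul_inv_smul₀ hτ.ne']

/-- The control running `u` backwards in time. -/
def reverse : Control p V →L[ℝ] Control p V :=
  reparam 1 (-1)

theorem coeFn_reverse (u : Control p V) :
    reverse u =ᵐ[volume.restrict (Icc 0 1)] fun t ↦ (-1 : ℝ) • u (1 + -1 * t) := by
  filter_upwards [coeFn_reparam 1 (-1) u, ae_restrict_mem measurableSet_Icc] with t ht h't
  rw [reverse, ht, indicator_of_mem]
  constructor <;> linarith [h't.1, h't.2]

theorem one_add_neg_one_mul_mem_Icc {t : ℝ} (ht : t ∈ Icc (0 : ℝ) 1) :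
    1 + -1 * t ∈ Icc (0 : ℝ) 1 :=
  ⟨by linarith [ht.2], by linarith [ht.1]⟩

theorem reverse_reverse (u : Control p V) : reverse (reverse u) = u := by
  refine Lp.ext ?_
  filter_upwards [coeFn_reverse (reverse u),
    ae_comp_affine (coeFn_reverse u) (by norm_num) fun _ ↦ one_add_neg_one_mul_mem_Icc]
    with t h₁ h₂
  rw [h₁, h₂]
  simp

end Reparam

namespace ControlSystem

variable {W E : Type u} [NormedAddCommGroup W] [NormedSpace ℝ W]
  [NormedAddCommGroup E] [NormedSpace ℝ E] [CompleteSpace E] (X : ControlSystem W E)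
  {p : ℝ≥0∞} [hp : Fact (1 ≤ p)]

variable {X} in
theorem IsSolution.endpoint_affine {w : Control p W} {y : E} {γ : ℝ → E}
    (h : X.IsSolution w y γ) {a c : ℝ} (hac : ∀ t ∈ Icc (0 : ℝ) 1, a + c * t ∈ Icc (0 : ℝ) 1)
    {v : Control p W} (hv : v =ᵐ[volume.restrict (Icc 0 1)] fun t ↦ c • w (a + c * t)) :
    X.endpoint v (γ a) = γ (a + c) := by
  simpa using ((h.affine (integrableOn_control w) hac).congr_ae hv.symm).endpoint_eq

theorem endpoint_endpoint_of_ae_eq {τ : ℝ} (hτ : τ ∈ Icc (0 : ℝ) 1) {w w₁ w₂ : Control p W}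
    (h₁ : w₁ =ᵐ[volume.restrict (Icc 0 1)] fun t ↦ τ • w (0 + τ * t))
    (h₂ : w₂ =ᵐ[volume.restrict (Icc 0 1)] fun t ↦ (1 - τ) • w (τ + (1 - τ) * t)) (y : E) :
    X.endpoint w₂ (X.endpoint w₁ y) = X.endpoint w y := by
  have h := X.isSolution_traj w y
  have e₁ := h.endpoint_affine (fun t ht ↦
    ⟨by nlinarith [ht.1, hτ.1], by nlinarith [ht.1, ht.2, hτ.1, hτ.2]⟩) h₁
  have e₂ := h.endpoint_affine (fun t ht ↦
    ⟨by nlinarith [ht.1, hτ.1, hτ.2], by nlinarith [ht.1, ht.2, hτ.1, hτ.2]⟩) h₂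
  rw [h.zero, zero_add] at e₁
  rw [e₁, e₂, add_sub_cancel, ← h.endpoint_eq]

theorem endpoint_concat {τ : ℝ} (h₀ : 0 < τ) (h₁ : τ < 1) (q u : Control p W) (y : E) :
    X.endpoint (concat τ (q, u)) y = X.endpoint u (X.endpoint q y) :=
  (X.endpoint_endpoint_of_ae_eq ⟨h₀.le, h₁.le⟩ (concat_ae_eq_left h₀ h₁ q u)
    (concat_ae_eq_right h₀ h₁ q u) y).symm

theorem endpoint_reverse_endpoint (u : Control p W) (y : E) :
    X.endpoint (reverse u) (X.endpoint u y) = y := by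
  have h := X.isSolution_traj u y
  have e := h.endpoint_affine (fun _ ↦ one_add_neg_one_mul_mem_Icc) (coeFn_reverse u)
  rwa [← h.endpoint_eq, add_neg_cancel, h.zero] at e

theorem endpoint_endpoint_reverse (u : Control p W) (y : E) :
    X.endpoint u (X.endpoint (reverse u) y) = y := by
  simpa only [reverse_reverse] using X.endpoint_reverse_endpoint (reverse u) y

end ControlSystem

section Drift

variable {V : Type*} [NormedAddCommGroup V] [NormedSpace ℝ V] {p : ℝ≥0∞} [hp : Fact (1 ≤ p)]

/-- The control `s ↦ (r, u s)`. For a control system with controls in `ℝ × V`, the vector field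
attached to `(1, 0)` is the drift, so that `r` is the speed at which the drift is followed. -/
def withDrift : ℝ × Control p V →L[ℝ] Control p (ℝ × V) :=
  (Lp.constL p _ ℝ ∘L ContinuousLinearMap.inl ℝ ℝ V).coprod
    ((ContinuousLinearMap.inr ℝ ℝ V).compLpL p _)

theorem coeFn_withDrift (r : ℝ) (u : Control p V) :
    withDrift (r, u) =ᵐ[volume.restrict (Icc 0 1)] fun s ↦ (r, u s) := by
  have h : withDrift (r, u) =
      Lp.const p _ ((r, 0) : ℝ × V) + (ContinuousLinearMap.inr ℝ ℝ V).compLpL p _ u :=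
    rfl
  filter_upwards [Lp.coeFn_add (Lp.const p _ ((r, 0) : ℝ × V))
      ((ContinuousLinearMap.inr ℝ ℝ V).compLpL p _ u),
    Lp.coeFn_const p (volume.restrict (Icc (0 : ℝ) 1)) ((r, 0) : ℝ × V),
    (ContinuousLinearMap.inr ℝ ℝ V).coeFn_compLpL u] with s h₁ h₂ h₃
  rw [h, h₁, Pi.add_apply, h₂, h₃]
  simp

theorem withDrift_ae_eq_affine {a c : ℝ}
    (hac : ∀ t ∈ Icc (0 : ℝ) 1, a + c * t ∈ Icc (0 : ℝ) 1) (hc : c ≠ 0) {r : ℝ}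
    {u v : Control p V} (hv : v =ᵐ[volume.restrict (Icc 0 1)] fun t ↦ c • u (a + c * t)) :
    withDrift (c * r, v) =ᵐ[volume.restrict (Icc 0 1)]
      fun t ↦ c • withDrift (r, u) (a + c * t) := by
  filter_upwards [coeFn_withDrift (c * r) v, ae_comp_affine (coeFn_withDrift r u) hc hac, hv]
    with t h₁ h₂ h₃
  rw [h₁, h₂, h₃, Prod.smul_mk, smul_eq_mul]

theorem reverse_withDrift (r : ℝ) (u : Control p V) :
    reverse (withDrift (r, u)) = withDrift (-r, reverse u) := by
  have h := withDrift_ae_eq_affine (r := r) (fun _ ↦ one_add_neg_one_mul_mem_Icc) (by norm_num)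
    (coeFn_reverse u)
  rw [neg_one_mul] at h
  exact Lp.ext ((coeFn_reverse _).trans h.symm)

end Drift

namespace ControlSystem

variable {V E : Type u} [NormedAddCommGroup V] [NormedSpace ℝ V]
  [NormedAddCommGroup E] [NormedSpace ℝ E] [CompleteSpace E] (X : ControlSystem (ℝ × V) E)
  {p : ℝ≥0∞} [hp : Fact (1 ≤ p)]

/-- The endpoint of the trajectory from `y` of the control `u`, the drift being followed at
speed `r`. -/
def driftEndpoint (r : ℝ) (u : Control p V) (y : E) : E :=
  X.endpoint (withDrift (r, u)) y

theorem contDiff_driftEndpoint [CompleteSpace V] : ContDiff ℝ (⊤ : ℕ∞)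
    fun q : ℝ × Control p V × E ↦ X.driftEndpoint q.1 q.2.1 q.2.2 := by
  have hdrift : ContDiff ℝ (⊤ : ℕ∞) fun q : ℝ × Control p V × E ↦
      (withDrift (q.1, q.2.1), q.2.2) := by fun_prop
  exact X.contDiff_endpoint.comp hdrift

theorem driftEndpoint_concat {τ : ℝ} (h₀ : 0 < τ) (h₁ : τ < 1) (r : ℝ) (q u : Control p V)
    (y : E) :
    X.driftEndpoint r (concat τ (q, u)) y =
      X.driftEndpoint ((1 - τ) * r) u (X.driftEndpoint (τ * r) q y) := by
  refine (X.endpoint_endpoint_of_ae_eq ⟨h₀.le, h₁.le⟩ ?_ ?_ y).symm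
  · exact withDrift_ae_eq_affine (fun t ht ↦ ⟨by nlinarith [ht.1], by nlinarith [ht.2]⟩) h₀.ne'
      (concat_ae_eq_left h₀ h₁ q u)
  · exact withDrift_ae_eq_affine (fun t ht ↦ ⟨by nlinarith [ht.1], by nlinarith [ht.2]⟩)
      (sub_pos.2 h₁).ne' (concat_ae_eq_right h₀ h₁ q u)

theorem driftEndpoint_reverse_driftEndpoint (r : ℝ) (u : Control p V) (y : E) :
    X.driftEndpoint (-r) (reverse u) (X.driftEndpoint r u y) = y := by
  rw [driftEndpoint, ← reverse_withDrift]
  exact X.endpoint_reverse_endpoint _ y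

theorem driftEndpoint_driftEndpoint_reverse (r : ℝ) (u : Control p V) (y : E) :
    X.driftEndpoint r u (X.driftEndpoint (-r) (reverse u) y) = y := by
  rw [driftEndpoint, driftEndpoint, ← reverse_withDrift]
  exact X.endpoint_endpoint_reverse _ y

/-- The driftless part of a control-affine system. -/
def driftless : ControlSystem V E where
  field y := X.field y ∘L ContinuousLinearMap.inr ℝ ℝ V
  smooth := X.smooth.clm_comp contDiff_const
  lipConst := X.lipConst
  lipschitz := LipschitzWith.of_dist_le_mul fun y y' ↦ by
    rw [dist_eq_norm, ← ContinuousLinearMap.sub_comp]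
    calc _ ≤ ‖X.field y - X.field y'‖ * ‖ContinuousLinearMap.inr ℝ ℝ V‖ :=
          ContinuousLinearMap.opNorm_comp_le _ _
      _ ≤ ‖X.field y - X.field y'‖ * 1 := by
          gcongr
          exact ContinuousLinearMap.opNorm_le_bound _ zero_le_one fun v ↦ by simp
      _ ≤ _ := (mul_one _).trans_le ((dist_eq_norm _ _).symm.trans_le (X.lipschitz.dist_le_mul _ _))

theorem driftEndpoint_zero (u : Control p V) (y : E) :
    X.driftEndpoint 0 u y = X.driftless.endpoint u y := by
  have h := X.driftless.isSolution_traj u y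
  have h' : X.IsSolution (fun s ↦ ((0 : ℝ), u s)) y
    (fun t ↦ X.driftless.traj (u, y) (projIcc 0 1 zero_le_one t)) := h
  exact (h'.congr_ae (coeFn_withDrift 0 u).symm).endpoint_eq.trans h.endpoint_eq.symm

end ControlSystem

/-! ### Iterated commutators of flows -/

section Calculus

variable {E F : Type u} [NormedAddCommGroup E] [NormedSpace ℝ E]
  [NormedAddCommGroup F] [NormedSpace ℝ F]

theorem hasDerivAt_add_smul (y v : E) : HasDerivAt (fun s : ℝ ↦ y + s • v) v 0 := by
  simpa using ((hasDerivAt_id (0 : ℝ)).smul_const v).const_add y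

theorem hasDerivAt_comp_contDiff {f : E → F} (hf : ContDiff ℝ (⊤ : ℕ∞) f) {c : ℝ → E} {t : ℝ}
    {c' : E} (hc : HasDerivAt c c' t) : HasDerivAt (fun s ↦ f (c s)) (fderiv ℝ f (c t) c') t :=
  (hf.differentiable (by simp) _).hasFDerivAt.comp_hasDerivAt t hc

theorem contDiff_integral_mul_fst [CompleteSpace F] {k : ℝ × E → F}
    (hk : ContDiff ℝ (⊤ : ℕ∞) k) :
    ContDiff ℝ (⊤ : ℕ∞) fun z : ℝ × E ↦ ∫ s in (0 : ℝ)..1, k (s * z.1, z.2) := by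
  let path : ℝ × E →L[ℝ] C(unitInterval, ℝ × E) :=
    pointwiseBilin (ContinuousLinearMap.lsmul ℝ ℝ) ⟨Subtype.val, continuous_subtype_val⟩ ∘L
        ContinuousLinearMap.const ℝ unitInterval ∘L
          ContinuousLinearMap.inl ℝ ℝ E ∘L ContinuousLinearMap.fst ℝ ℝ E +
      ContinuousLinearMap.const ℝ unitInterval ∘L
        ContinuousLinearMap.inr ℝ ℝ E ∘L ContinuousLinearMap.snd ℝ ℝ E
  have hpath (z : ℝ × E) (s : unitInterval) : path z s = (s * z.1, z.2) := by simp [path]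
  let K : C(ℝ × E, F) := ⟨k, hk.continuous⟩
  have hsmooth : ContDiff ℝ (⊤ : ℕ∞) fun z ↦ primitive (pathToLp 1 (K.comp (path z))) 1 :=
    (ContinuousMap.evalCLM ℝ (1 : unitInterval) ∘L primitive ∘L
      pathToLp (E := F) (1 : ℝ≥0∞)).contDiff.comp
        ((contDiff_continuousMap_comp (f := K) hk).comp path.contDiff)
  convert hsmooth using 2 with z
  rw [primitive_apply]
  refine (intervalIntegral_congr_of_mem_Icc ?_ unitInterval.zero_mem unitInterval.one_mem).symm
  filter_upwards [coeFn_pathToLp (p := 1) (K.comp (path z)), ae_restrict_mem measurableSet_Icc]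
    with s hs hmem
  rw [hs, projIcc_of_mem _ hmem, ContinuousMap.comp_apply, hpath]
  rfl

theorem exists_contDiff_eq_smul [CompleteSpace F] {h : ℝ × E → F}
    (hh : ContDiff ℝ (⊤ : ℕ∞) h) (h0 : ∀ y, h (0, y) = 0) :
    ∃ g : ℝ × E → F, ContDiff ℝ (⊤ : ℕ∞) g ∧ (∀ ε y, h (ε, y) = ε • g (ε, y)) ∧
      ∀ y, g (0, y) = fderiv ℝ h (0, y) (1, 0) := by
  have hk : ContDiff ℝ (⊤ : ℕ∞) fun z ↦ fderiv ℝ h z ((1, 0) : ℝ × E) :=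
    (hh.fderiv_right (by simp)).clm_apply contDiff_const
  refine ⟨_, contDiff_integral_mul_fst hk, fun ε y ↦ ?_, fun y ↦ by simp⟩
  have hderiv (s : ℝ) :
      HasDerivAt (fun s ↦ h (s * ε, y)) (ε • fderiv ℝ h (s * ε, y) (1, 0)) s := by
    have hline : HasDerivAt (fun s : ℝ ↦ (s * ε, y)) (ε • ((1, 0) : ℝ × E)) s := by
      simpa using ((hasDerivAt_id s).mul_const ε).prodMk (hasDerivAt_const s y)
    simpa only [map_smul] using hasDerivAt_comp_contDiff hh hline
  have hcont : Continuous fun s ↦ ε • fderiv ℝ h (s * ε, y) (1, 0) :=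
    (hk.continuous.comp (by fun_prop)).const_smul ε
  have hftc := intervalIntegral.integral_eq_sub_of_hasDerivAt (fun s _ ↦ hderiv s)
    (hcont.intervalIntegrable 0 1)
  simpa only [one_mul, zero_mul, h0, sub_zero, intervalIntegral.integral_smul] using hftc.symm

section DeformationOfIdentity

variable {A : ℝ × E → E} {X : E → E}

theorem fderiv_apply_of_eq_id (hA : ContDiff ℝ (⊤ : ℕ∞) A) (hA₀ : ∀ y, A (0, y) = y) {y v : E}
    (hX : HasDerivAt (fun a ↦ A (a, y)) v 0) (c : ℝ) (w : E) :
    fderiv ℝ A (0, y) (c, w) = c • v + w := by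
  have htime : fderiv ℝ A (0, y) (1, 0) = v :=
    (hasDerivAt_comp_contDiff hA ((hasDerivAt_id' (0 : ℝ)).prodMk (hasDerivAt_const 0 y))).unique hX
  have hspace : fderiv ℝ A (0, y) (0, w) = w := by
    have h := hasDerivAt_comp_contDiff hA
      ((hasDerivAt_const (0 : ℝ) (0 : ℝ)).prodMk (hasDerivAt_add_smul y w))
    simp only [hA₀, zero_smul, add_zero] at h
    exact h.unique (hasDerivAt_add_smul y w)
  have hsplit : ((c, w) : ℝ × E) = c • (1, 0) + (0, w) := by simp
  rw [hsplit, map_add, map_smul, htime, hspace]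

theorem fderiv_fderiv_apply_of_eq_id (hA : ContDiff ℝ (⊤ : ℕ∞) A) (hA₀ : ∀ y, A (0, y) = y)
    (hX : ContDiff ℝ (⊤ : ℕ∞) X) (hAX : ∀ y, HasDerivAt (fun a ↦ A (a, y)) (X y) 0) (y w u : E)
    (c : ℝ) : fderiv ℝ (fderiv ℝ A) (0, y) (c, u) (0, w) = c • fderiv ℝ X y w := by
  have hsymm : IsSymmSndFDerivAt ℝ A (0, y) := hA.contDiffAt.isSymmSndFDerivAt
    (by
    rw [minSmoothness_of_isRCLikeNormedField]
    exact WithTop.coe_le_coe.2 (le_top : (2 : ℕ∞) ≤ ⊤))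
  have hcurve := (hasDerivAt_comp_contDiff (hA.fderiv_right (m := (⊤ : ℕ∞)) (by simp))
    ((hasDerivAt_const (0 : ℝ) (0 : ℝ)).prodMk (hasDerivAt_add_smul y w))).clm_apply
      (hasDerivAt_const (0 : ℝ) ((c, u) : ℝ × E))
  simp only [map_zero, add_zero, zero_smul] at hcurve
  simp only [fderiv_apply_of_eq_id hA hA₀ (hAX _)] at hcurve
  have hderiv := ((hasDerivAt_comp_contDiff hX (hasDerivAt_add_smul y w)).const_smul c).add_const u
  rw [zero_smul, add_zero] at hderiv
  rw [hsymm]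
  exact hcurve.unique hderiv

theorem exists_contDiff_pullback_sub_eq_smul [CompleteSpace E] (hA : ContDiff ℝ (⊤ : ℕ∞) A)
    (hA₀ : ∀ y, A (0, y) = y) (hX : ContDiff ℝ (⊤ : ℕ∞) X)
    (hAX : ∀ y, HasDerivAt (fun a ↦ A (a, y)) (X y) 0) {g : ℝ × E → E}
    (hg : ContDiff ℝ (⊤ : ℕ∞) g) :
    ∃ g' : ℝ × E → E, ContDiff ℝ (⊤ : ℕ∞) g' ∧
      (∀ ε y, fderiv ℝ A (-ε, A (ε, y)) (0, g (ε, A (ε, y))) - g (ε, y) = ε • g' (ε, y)) ∧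
      ∀ y, g' (0, y) = VectorField.lieBracket ℝ X (fun y ↦ g (0, y)) y := by
  have hDA : ContDiff ℝ (⊤ : ℕ∞) (fderiv ℝ A) := hA.fderiv_right (by simp)
  have hpull : ContDiff ℝ (⊤ : ℕ∞) fun z : ℝ × E ↦
      fderiv ℝ A (-z.1, A z) (0, g (z.1, A z)) - g z := by fun_prop
  obtain ⟨g', hg', heq, hg'₀⟩ := exists_contDiff_eq_smul hpull fun y ↦ by
    simp [hA₀, fderiv_apply_of_eq_id hA hA₀ (hAX _)]
  refine ⟨g', hg', heq, fun y ↦ ?_⟩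
  have hg₀ : fderiv ℝ (fun y ↦ g (0, y)) y (X y) = fderiv ℝ g (0, y) (0, X y) := by
    have h := hasDerivAt_comp_contDiff hg
      ((hasDerivAt_const (0 : ℝ) (0 : ℝ)).prodMk (hasDerivAt_add_smul y (X y)))
    have h' := hasDerivAt_comp_contDiff (f := fun y ↦ g (0, y)) (by fun_prop)
      (hasDerivAt_add_smul y (X y))
    simp only [zero_smul, add_zero] at h h'
    exact h'.unique h
  have hline : HasDerivAt (fun s : ℝ ↦ (s, y)) ((1, 0) : ℝ × E) 0 :=
    (hasDerivAt_id' _).prodMk (hasDerivAt_const _ _)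
  have hgflow := (hasDerivAt_const (0 : ℝ) (0 : ℝ)).prodMk
    (hasDerivAt_comp_contDiff hg ((hasDerivAt_id' (0 : ℝ)).prodMk (hAX y)))
  have hDflow := hasDerivAt_comp_contDiff hDA ((hasDerivAt_neg' (0 : ℝ)).prodMk (hAX y))
  have htotal := (hasDerivAt_comp_contDiff hpull hline).unique
    ((hDflow.clm_apply hgflow).sub (hasDerivAt_comp_contDiff hg hline))
  have hsplit : ((1, X y) : ℝ × E) = (1, 0) + (0, X y) := by simp
  rw [hg'₀, htotal]
  simp only [hA₀, neg_zero, fderiv_apply_of_eq_id hA hA₀ (hAX _), zero_smul, zero_add]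
  rw [fderiv_fderiv_apply_of_eq_id hA hA₀ hX hAX, hsplit, map_add, VectorField.lieBracket, hg₀]
  module

theorem hasDerivAt_commutator {Q : ℝ × E → E} {v : E → E} (hQ : ContDiff ℝ (⊤ : ℕ∞) Q)
    (hQ₀ : ∀ y, Q (0, y) = y) (hQv : ∀ y, HasDerivAt (fun ρ ↦ Q (ρ, y)) (v y) 0) {b : E → E}
    (hb : ContDiff ℝ (⊤ : ℕ∞) b) (z : E) :
    HasDerivAt (fun ρ ↦ Q (-ρ, b (Q (ρ, z)))) (fderiv ℝ b z (v z) - v (b z)) 0 := by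
  have hinner := hasDerivAt_comp_contDiff hb (hQv z)
  have houter := hasDerivAt_comp_contDiff hQ ((hasDerivAt_neg' (0 : ℝ)).prodMk hinner)
  simp only [hQ₀, neg_zero, fderiv_apply_of_eq_id hQ hQ₀ (hQv _)] at houter
  exact houter.congr_deriv (by module)

end DeformationOfIdentity

end Calculus

theorem reverse_constL {V : Type*} [NormedAddCommGroup V] [NormedSpace ℝ V] {p : ℝ≥0∞}
    [hp : Fact (1 ≤ p)] (v : V) :
    reverse (Lp.constL p (volume.restrict (Icc (0 : ℝ) 1)) ℝ v) = Lp.constL p _ ℝ (-v) := by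
  refine Lp.ext ?_
  filter_upwards [coeFn_reverse (p := p) (Lp.constL p _ ℝ v),
    ae_comp_affine (Lp.coeFn_const p _ v) (a := 1) (c := -1) (by norm_num)
      (fun _ ↦ one_add_neg_one_mul_mem_Icc), Lp.coeFn_const p _ (-v)] with t h₁ h₂ h₃
  rw [h₁, Lp.constL_apply, Lp.constL_apply, h₂, h₃, Function.const_apply, Function.const_apply,
    neg_one_smul]

namespace ControlSystem

variable {V E : Type u} [NormedAddCommGroup V] [NormedSpace ℝ V]
  [NormedAddCommGroup E] [NormedSpace ℝ E] (X : ControlSystem V E) {p : ℝ≥0∞} [hp : Fact (1 ≤ p)]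

theorem contDiff_field_apply (v : V) : ContDiff ℝ (⊤ : ℕ∞) fun y ↦ X.field y v :=
  X.smooth.clm_apply contDiff_const

/-- The nested bracket `[X w₁, [X w₂, …, [X wₘ, X v]…]]` for the list `[w₁, …, wₘ]`. -/
def nestedBracket : List V → V → E → E
  | [], v => fun y ↦ X.field y v
  | w :: l, v => VectorField.lieBracket ℝ (fun y ↦ X.field y w) (nestedBracket l v)

theorem contDiff_nestedBracket (l : List V) (v : V) :
    ContDiff ℝ (⊤ : ℕ∞) (X.nestedBracket l v) := by
  induction l with
  | nil => exact X.contDiff_field_apply v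
  | cons w l ih => exact ContDiff.lieBracket_vectorField (X.contDiff_field_apply w) ih (by simp)

theorem isSolution_zero (y : E) : X.IsSolution (0 : ℝ → V) y fun _ ↦ y :=
  ⟨continuousOn_const, fun t _ ↦ by simp⟩

variable [CompleteSpace E]

theorem endpoint_zero (y : E) : X.endpoint (0 : Control p V) y = y :=
  ((X.isSolution_zero y).congr_ae (Lp.coeFn_zero V p _).symm).endpoint_eq

theorem traj_zero (y : E) : X.traj ((0 : Control p V), y) = ContinuousMap.const _ y :=
  (X.existsUnique_picard _).unique (X.picard_traj _) (by simp [picard])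

variable (p) in
/-- The flow of the vector field `X.field · v`, as a function of time and initial point. -/
def flow (v : V) (q : ℝ × E) : E :=
  X.endpoint (q.1 • Lp.constL p (volume.restrict (Icc (0 : ℝ) 1)) ℝ v) q.2

theorem flow_zero (v : V) (y : E) : X.flow p v (0, y) = y := by
  rw [flow, zero_smul, endpoint_zero]

theorem flow_neg_flow (v : V) (a : ℝ) (y : E) : X.flow p v (-a, X.flow p v (a, y)) = y := by
  have h := X.endpoint_reverse_endpoint (Lp.constL p (volume.restrict (Icc 0 1)) ℝ (a • v)) y
  rwa [reverse_constL, map_neg, map_smul, ← neg_smul] at h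

variable [CompleteSpace V]

theorem hasDerivAt_endpoint_smul (w : Control p V) (y : E) :
    HasDerivAt (fun a : ℝ ↦ X.endpoint (a • w) y) (∫ s in (0 : ℝ)..1, X.field y (w s)) 0 := by
  let Y : C(E, V →L[ℝ] E) := ⟨X.field, X.smooth.continuous⟩
  let slope (a : ℝ) : E := controlIntegral (Y.comp (X.traj (a • w, y))) w 1
  have hend (a : ℝ) : X.endpoint (a • w) y = y + a • slope a := by
    have h := congrArg (· 1) (X.picard_traj (a • w, y))
    simpa [picard, Y, slope, endpoint] using h.symm
  have htraj : Continuous fun a : ℝ ↦ X.traj (a • w, y) :=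
    X.contDiff_traj.continuous.comp (by fun_prop)
  have hslope : Continuous slope := by fun_prop
  have hslope₀ : slope 0 = ∫ s in (0 : ℝ)..1, X.field y (w s) := by
    simp only [slope, zero_smul, traj_zero, controlIntegral_apply]
    rfl
  simp only [hend, ← hslope₀]
  refine HasDerivAt.const_add y (hasDerivAt_iff_tendsto_slope_zero.2 ?_)
  refine (hslope.tendsto 0).mono_left nhdsWithin_le_nhds |>.congr' ?_
  filter_upwards [self_mem_nhdsWithin] with a ha
  rw [zero_add, zero_smul, sub_zero, inv_smul_smul₀ ha]

variable (p)

theorem contDiff_flow (v : V) : ContDiff ℝ (⊤ : ℕ∞) (X.flow p v) := by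
  have h : ContDiff ℝ (⊤ : ℕ∞) fun q : ℝ × E ↦
      (q.1 • Lp.constL p (volume.restrict (Icc (0 : ℝ) 1)) ℝ v, q.2) := by fun_prop
  exact X.contDiff_endpoint.comp h

theorem hasDerivAt_flow (v : V) (y : E) :
    HasDerivAt (fun a ↦ X.flow p v (a, y)) (X.field y v) 0 := by
  refine (X.hasDerivAt_endpoint_smul _ y).congr_deriv ?_
  have hconst : (fun s ↦ X.field y (Lp.constL p (volume.restrict (Icc (0 : ℝ) 1)) ℝ v s))
      =ᵐ[volume.restrict (Icc 0 1)] fun _ ↦ X.field y v := by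
    filter_upwards [Lp.coeFn_const p (volume.restrict (Icc (0 : ℝ) 1)) v] with s hs
    rw [Lp.constL_apply, hs, Function.const_apply]
  rw [intervalIntegral_congr_of_mem_Icc hconst unitInterval.zero_mem unitInterval.one_mem]
  simp

end ControlSystem

/-- Iterated group commutators: the flow at time `ε` of each vector field of the list is
conjugated with a control whose derivative in `ρ` at `ρ = 0` produces the nested bracket, up to the
factor `ε ^ l.length`. -/
def nestedControl {V : Type*} [NormedAddCommGroup V] [NormedSpace ℝ V] {p : ℝ≥0∞}
    [Fact (1 ≤ p)] : List V → V → (ℝ × ℝ →L[ℝ] Control p V)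
  | [], v => (ContinuousLinearMap.snd ℝ ℝ ℝ).smulRight (Lp.constL p _ ℝ v)
  | w :: l, v =>
    let flow : ℝ × ℝ →L[ℝ] Control p V :=
      (ContinuousLinearMap.fst ℝ ℝ ℝ).smulRight (Lp.constL p _ ℝ w)
    concat (1 / 2) ∘L
      ((concat (1 / 2) ∘L flow.prod (nestedControl l v)).prod
        (concat (1 / 2) ∘L (-flow).prod (nestedControl l v ∘L
          (ContinuousLinearMap.fst ℝ ℝ ℝ).prod (-ContinuousLinearMap.snd ℝ ℝ ℝ))))

namespace ControlSystem

variable {V E : Type u} [NormedAddCommGroup V] [NormedSpace ℝ V]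
  [NormedAddCommGroup E] [NormedSpace ℝ E] [CompleteSpace E] (X : ControlSystem V E)
  {p : ℝ≥0∞} [hp : Fact (1 ≤ p)]

theorem endpoint_nestedControl_cons (w : V) (l : List V) (v : V) (ε ρ : ℝ) (y : E) :
    X.endpoint (nestedControl (p := p) (w :: l) v (ε, ρ)) y =
      X.endpoint (nestedControl (p := p) l v (ε, -ρ)) (X.flow p w (-ε,
        X.endpoint (nestedControl (p := p) l v (ε, ρ)) (X.flow p w (ε, y)))) := by
  simp only [nestedControl, ContinuousLinearMap.comp_apply, ContinuousLinearMap.prod_apply,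
    X.endpoint_concat one_half_pos one_half_lt_one, flow, neg_smul]
  rfl

theorem endpoint_nestedControl_zero (l : List V) (v : V) (ε : ℝ) (y : E) :
    X.endpoint (nestedControl (p := p) l v (ε, 0)) y = y := by
  induction l generalizing y with
  | nil => simp [nestedControl, endpoint_zero]
  | cons w l ih => rw [endpoint_nestedControl_cons, neg_zero, ih, ih, flow_neg_flow]

variable [CompleteSpace V]

theorem exists_hasDerivAt_endpoint_nestedControl (l : List V) (v : V) :
    ∃ g : ℝ × E → E, ContDiff ℝ (⊤ : ℕ∞) g ∧ (∀ y, g (0, y) = X.nestedBracket l v y) ∧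
      ∀ ε y, HasDerivAt (fun ρ ↦ X.endpoint (nestedControl (p := p) l v (ε, ρ)) y)
        (ε ^ l.length • g (ε, y)) 0 := by
  induction l with
  | nil =>
    refine ⟨fun z ↦ X.field z.2 v, (X.contDiff_field_apply v).comp contDiff_snd, fun _ ↦ rfl,
      fun ε y ↦ ?_⟩
    rw [List.length_nil, pow_zero, one_smul]
    exact X.hasDerivAt_flow p v y
  | cons w l ih =>
    obtain ⟨g, hg, hg₀, hderiv⟩ := ih
    obtain ⟨g', hg', hpull, hg'₀⟩ := exists_contDiff_pullback_sub_eq_smul (X.contDiff_flow p w)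
      (X.flow_zero w) (X.contDiff_field_apply w) (X.hasDerivAt_flow p w) hg
    refine ⟨g', hg', fun y ↦ ?_, fun ε y ↦ ?_⟩
    · rw [hg'₀, funext hg₀]
      rfl
    have hQ : ContDiff ℝ (⊤ : ℕ∞)
        fun q : ℝ × E ↦ X.endpoint (nestedControl (p := p) l v (ε, q.1)) q.2 :=
      X.contDiff_endpoint.comp (by fun_prop :
        ContDiff ℝ (⊤ : ℕ∞) fun q : ℝ × E ↦ (nestedControl (p := p) l v (ε, q.1), q.2))
    have hflow (z u : E) : fderiv ℝ (fun z ↦ X.flow p w (-ε, z)) z u =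
        fderiv ℝ (X.flow p w) (-ε, z) (0, u) := by
      have h := ((X.contDiff_flow p w).differentiable (by simp) (-ε, z)).hasFDerivAt.comp z
        (hasFDerivAt_prodMk_right (-ε) z)
      exact congrArg (· u) h.fderiv
    have hcomm := hasDerivAt_commutator hQ (X.endpoint_nestedControl_zero l v ε) (hderiv ε)
      (b := fun z ↦ X.flow p w (-ε, z))
      ((X.contDiff_flow p w).comp (contDiff_const.prodMk contDiff_id)) (X.flow p w (ε, y))
    simp only [endpoint_nestedControl_cons]
    refine hcomm.congr_deriv ?_
    have hscale (u : E) : ((0, ε ^ l.length • u) : ℝ × E) = ε ^ l.length • (0, u) := by simp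
    rw [flow_neg_flow, List.length_cons, pow_succ, mul_smul, ← hpull, smul_sub, ← map_smul,
      ← hscale]
    exact congrArg (· - _) (hflow _ _)

end ControlSystem

/-! ### Bracket-generating systems -/

namespace ControlSystem

variable {V E : Type u} [NormedAddCommGroup V] [NormedSpace ℝ V]
  [NormedAddCommGroup E] [NormedSpace ℝ E] (X : ControlSystem V E)

/-- The space of vector fields spanned by the nested brackets of `X`. -/
def bracketSpan : Submodule ℝ (E → E) :=
  Submodule.span ℝ (range fun w : List V × V ↦ X.nestedBracket w.1 w.2)

variable {X}

theorem contDiff_of_mem_bracketSpan {A : E → E} (hA : A ∈ X.bracketSpan) :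
    ContDiff ℝ (⊤ : ℕ∞) A := by
  induction hA using Submodule.span_induction with
  | mem A h =>
    obtain ⟨w, rfl⟩ := h
    exact X.contDiff_nestedBracket _ _
  | zero => exact contDiff_const
  | add A B _ _ ihA ihB => exact ihA.add ihB
  | smul a A _ ih => exact ih.const_smul a

theorem nestedBracket_mem_bracketSpan (l : List V) (v : V) :
    X.nestedBracket l v ∈ X.bracketSpan :=
  Submodule.subset_span ⟨(l, v), rfl⟩

theorem lieBracket_mem_bracketSpan_of_forall {A : E → E}
    (h : ∀ l v, VectorField.lieBracket ℝ (X.nestedBracket l v) A ∈ X.bracketSpan)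
    {B : E → E} (hB : B ∈ X.bracketSpan) : VectorField.lieBracket ℝ B A ∈ X.bracketSpan := by
  induction hB using Submodule.span_induction with
  | mem B hB =>
    obtain ⟨w, rfl⟩ := hB
    exact h w.1 w.2
  | zero =>
    rw [VectorField.lieBracket_zero_left]
    exact zero_mem _
  | add B C hBmem hCmem hB hC =>
    have hadd : VectorField.lieBracket ℝ (B + C) A =
        VectorField.lieBracket ℝ B A + VectorField.lieBracket ℝ C A :=
      funext fun z ↦ VectorField.lieBracket_add_left
        ((contDiff_of_mem_bracketSpan hBmem).differentiable (by simp) z)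
        ((contDiff_of_mem_bracketSpan hCmem).differentiable (by simp) z)
    exact hadd ▸ add_mem hB hC
  | smul a B hBmem hB =>
    have hsmul : VectorField.lieBracket ℝ (a • B) A = a • VectorField.lieBracket ℝ B A :=
      funext fun z ↦ VectorField.lieBracket_const_smul_left
        ((contDiff_of_mem_bracketSpan hBmem).differentiable (by simp) z)
    exact hsmul ▸ Submodule.smul_mem _ _ hB

theorem lieBracket_field_mem_bracketSpan (v : V) {B : E → E} (hB : B ∈ X.bracketSpan) :
    VectorField.lieBracket ℝ (fun y ↦ X.field y v) B ∈ X.bracketSpan := by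
  have hswap (A : E → E) : VectorField.lieBracket ℝ (fun y ↦ X.field y v) A =
      -VectorField.lieBracket ℝ A fun y ↦ X.field y v :=
    funext fun _ ↦ VectorField.lieBracket_swap
  rw [hswap, neg_mem_iff]
  refine lieBracket_mem_bracketSpan_of_forall (fun l w ↦ ?_) hB
  rw [← neg_mem_iff, ← hswap]
  exact nestedBracket_mem_bracketSpan (v :: l) w

theorem lieBracket_nestedBracket_mem_bracketSpan (l : List V) (v : V) {B : E → E}
    (hB : B ∈ X.bracketSpan) :
    VectorField.lieBracket ℝ (X.nestedBracket l v) B ∈ X.bracketSpan := by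
  induction l generalizing B with
  | nil => exact lieBracket_field_mem_bracketSpan v hB
  | cons w l ih =>
    have jacobi : VectorField.lieBracket ℝ (X.nestedBracket (w :: l) v) B =
        VectorField.lieBracket ℝ (fun y ↦ X.field y w)
          (VectorField.lieBracket ℝ (X.nestedBracket l v) B) -
        VectorField.lieBracket ℝ (X.nestedBracket l v)
          (VectorField.lieBracket ℝ (fun y ↦ X.field y w) B) := by
      funext z
      have h2 : minSmoothness ℝ 2 ≤ ((⊤ : ℕ∞) : WithTop ℕ∞) := by
        rw [minSmoothness_of_isRCLikeNormedField]
        exact WithTop.coe_le_coe.2 (le_top : (2 : ℕ∞) ≤ ⊤)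
      rw [Pi.sub_apply, VectorField.leibniz_identity_lieBracket h2
        (X.contDiff_field_apply w).contDiffAt (X.contDiff_nestedBracket l v).contDiffAt
        (contDiff_of_mem_bracketSpan hB).contDiffAt, add_sub_cancel_right]
      rfl
    rw [jacobi]
    exact sub_mem (lieBracket_field_mem_bracketSpan w (ih hB))
      (ih (lieBracket_field_mem_bracketSpan w hB))

theorem lieBracket_mem_bracketSpan {A B : E → E} (hA : A ∈ X.bracketSpan)
    (hB : B ∈ X.bracketSpan) : VectorField.lieBracket ℝ A B ∈ X.bracketSpan :=
  lieBracket_mem_bracketSpan_of_forall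
    (fun l v ↦ lieBracket_nestedBracket_mem_bracketSpan l v hB) hA

theorem apply_mem_span_of_mem_bracketSpan {A : E → E} (hA : A ∈ X.bracketSpan) (y : E) :
    A y ∈ Submodule.span ℝ (range fun w : List V × V ↦ X.nestedBracket w.1 w.2 y) := by
  have h := Submodule.mem_map_of_mem (f := LinearMap.proj (R := ℝ) (φ := fun _ : E ↦ E) y) hA
  rwa [bracketSpan, Submodule.map_span, ← range_comp] at h

end ControlSystem

theorem hasFDerivAt_comp_of_eq_id {A E : Type*} [NormedAddCommGroup A] [NormedSpace ℝ A]
    [NormedAddCommGroup E] [NormedSpace ℝ E] {Q : A × E → E} {y : E}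
    (hQ : DifferentiableAt ℝ Q (0, y)) (hQ₀ : ∀ y, Q (0, y) = y) {Q' : A →L[ℝ] E}
    (hQ' : HasFDerivAt (fun ρ ↦ Q (ρ, y)) Q' 0) {P : A → E} (hP₀ : P 0 = y) {P' : A →L[ℝ] E}
    (hP : HasFDerivAt P P' 0) : HasFDerivAt (fun ρ ↦ Q (ρ, P ρ)) (P' + Q') 0 := by
  have hfst : fderiv ℝ Q (0, y) ∘L .inl ℝ A E = Q' :=
    (hQ.hasFDerivAt.comp 0 (hasFDerivAt_prodMk_left 0 y)).unique hQ'
  have hsnd : fderiv ℝ Q (0, y) ∘L .inr ℝ A E = .id ℝ E :=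
    (hQ.hasFDerivAt.comp y (hasFDerivAt_prodMk_right 0 y)).unique
      ((hasFDerivAt_id y).congr_of_eventuallyEq (.of_forall hQ₀))
  have hcomp := HasFDerivAt.comp (0 : A) (g := Q) (by rw [hP₀]; exact hQ.hasFDerivAt)
    ((hasFDerivAt_id (0 : A)).prodMk hP)
  refine hcomp.congr_fderiv ?_
  ext r
  have h₁ := congrArg (· r) hfst
  have h₂ := congrArg (· (P' r)) hsnd
  simp only [ContinuousLinearMap.comp_apply, ContinuousLinearMap.inl_apply,
    ContinuousLinearMap.inr_apply, ContinuousLinearMap.id_apply] at h₁ h₂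
  rw [add_apply, ← h₁, ← h₂, ← map_add, Prod.mk_add_mk, zero_add, add_zero]
  rfl

/-- The continuous linear map `ρ ↦ ∑ i, ρ i • z i` determined by a finite family of vectors. -/
def sumSMul {ι E : Type*} [Fintype ι] [NormedAddCommGroup E] [NormedSpace ℝ E] (z : ι → E) :
    (ι → ℝ) →L[ℝ] E :=
  ∑ i, (ContinuousLinearMap.proj (R := ℝ) (φ := fun _ : ι ↦ ℝ) i).smulRight (z i)

theorem sumSMul_apply {ι E : Type*} [Fintype ι] [NormedAddCommGroup E] [NormedSpace ℝ E]
    (z : ι → E) (ρ : ι → ℝ) : sumSMul z ρ = ∑ i, ρ i • z i := by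
  simp [sumSMul]

namespace ControlSystem

variable {V E : Type u} [NormedAddCommGroup V] [NormedSpace ℝ V] [CompleteSpace V]
  [NormedAddCommGroup E] [NormedSpace ℝ E] [CompleteSpace E] (X : ControlSystem V E)
  {p : ℝ≥0∞} [hp : Fact (1 ≤ p)]

theorem exists_control_hasFDerivAt_sumSMul {ι : Type*} [Fintype ι]
    {c : ι → ℝ × ℝ →L[ℝ] Control p V} {v : ι → ℝ → E → E}
    (hc₀ : ∀ i ε y, X.endpoint (c i (ε, 0)) y = y)
    (hc : ∀ i ε y, HasDerivAt (fun ρ ↦ X.endpoint (c i (ε, ρ)) y) (v i ε y) 0) :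
    ∃ q : ℝ × (ι → ℝ) →L[ℝ] Control p V, (∀ ε y, X.endpoint (q (ε, 0)) y = y) ∧
      ∀ ε y, HasFDerivAt (fun ρ ↦ X.endpoint (q (ε, ρ)) y) (sumSMul fun i ↦ v i ε y) 0 := by
  classical
  suffices h : ∀ s : Finset ι, ∃ q : ℝ × (ι → ℝ) →L[ℝ] Control p V,
      (∀ ε y, X.endpoint (q (ε, 0)) y = y) ∧
      ∀ ε y, HasFDerivAt (fun ρ ↦ X.endpoint (q (ε, ρ)) y)
        (∑ i ∈ s, (ContinuousLinearMap.proj (R := ℝ) i).smulRight (v i ε y)) 0 from h Finset.univ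
  intro s
  induction s using Finset.induction_on with
  | empty =>
    refine ⟨0, fun ε y ↦ by simp [endpoint_zero], fun ε y ↦ ?_⟩
    simpa [endpoint_zero] using hasFDerivAt_const y (0 : ι → ℝ)
  | insert a s ha ih =>
    obtain ⟨q, hq₀, hq⟩ := ih
    let pr : ℝ × (ι → ℝ) →L[ℝ] ℝ × ℝ :=
      (ContinuousLinearMap.fst ℝ ℝ (ι → ℝ)).prod (.proj a ∘L .snd ℝ ℝ (ι → ℝ))
    have hend (ε : ℝ) (ρ : ι → ℝ) (y : E) :
        X.endpoint ((concat (1 / 2) ∘L (c a ∘L pr).prod q) (ε, ρ)) y =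
          X.endpoint (q (ε, ρ)) (X.endpoint (c a (ε, ρ a)) y) :=
      X.endpoint_concat one_half_pos one_half_lt_one _ _ _
    refine ⟨concat (1 / 2) ∘L (c a ∘L pr).prod q, fun ε y ↦ ?_, fun ε y ↦ ?_⟩
    · rw [hend, Pi.zero_apply, hc₀, hq₀]
    have hQ : ContDiff ℝ (⊤ : ℕ∞) fun z : (ι → ℝ) × E ↦ X.endpoint (q (ε, z.1)) z.2 :=
      X.contDiff_endpoint.comp
        (by fun_prop : ContDiff ℝ (⊤ : ℕ∞) fun z : (ι → ℝ) × E ↦ (q (ε, z.1), z.2))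
    have hP : HasFDerivAt (fun ρ : ι → ℝ ↦ X.endpoint (c a (ε, ρ a)) y)
        ((ContinuousLinearMap.proj (R := ℝ) a).smulRight (v a ε y)) 0 := by
      refine ((hc a ε y).hasFDerivAt.comp (0 : ι → ℝ)
        (ContinuousLinearMap.proj (R := ℝ) a).hasFDerivAt).congr_fderiv ?_
      ext
      simp
    simp only [hend, Finset.sum_insert ha]
    exact hasFDerivAt_comp_of_eq_id (hQ.differentiable (by simp) _) (hq₀ ε) (hq ε y) (hc₀ a ε y) hP

end ControlSystem

section RightInverse

theorem exists_finset_span_eq_top_of_isCompact {α Y E : Type*} [TopologicalSpace Y]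
    [NormedAddCommGroup E] [NormedSpace ℝ E] [FiniteDimensional ℝ E] {Z : α → Y → E}
    (hZ : ∀ i, Continuous (Z i)) {K : Set Y} (hK : IsCompact K)
    (h : ∀ y ∈ K, Submodule.span ℝ (range fun i ↦ Z i y) = ⊤) :
    ∃ s : Finset α, ∀ y ∈ K, Submodule.span ℝ (range fun i : s ↦ Z i y) = ⊤ := by
  classical
  have hlocal : ∀ y ∈ K, ∃ s : Finset α,
      ∀ᶠ y' in 𝓝 y, Submodule.span ℝ (range fun i : s ↦ Z i y') = ⊤ := by
    intro y hy
    obtain ⟨κ, a, -, hspan, hli⟩ := exists_linearIndependent' ℝ fun i ↦ Z i y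
    rw [h y hy] at hspan
    have := hli.finite
    have := Fintype.ofFinite κ
    have hcard : Fintype.card κ = Module.finrank ℝ E := by
      rw [← finrank_span_eq_card hli, hspan, finrank_top]
    have hcont : ContinuousAt (fun y' k ↦ Z (a k) y') y := by fun_prop
    refine ⟨Finset.univ.image a, (hcont.eventually hli.eventually).mono fun y' hy' ↦ ?_⟩
    refine top_unique ((hy'.span_eq_top_of_card_eq_finrank' hcard).symm.trans_le
      (Submodule.span_mono ?_))
    rintro _ ⟨k, rfl⟩
    exact ⟨⟨a k, Finset.mem_image_of_mem a (Finset.mem_univ k)⟩, rfl⟩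
  choose! s hs using hlocal
  obtain ⟨t, -, ht⟩ := hK.elim_nhds_subcover _ hs
  refine ⟨t.biUnion s, fun y hy ↦ ?_⟩
  obtain ⟨x, hx, hyx⟩ := mem_iUnion₂.1 (ht hy)
  refine top_unique (hyx.symm.trans_le (Submodule.span_mono ?_))
  rintro _ ⟨i, rfl⟩
  exact ⟨⟨i, Finset.mem_biUnion.2 ⟨x, hx, i.2⟩⟩, rfl⟩

theorem continuous_sumSMul {ι E Y : Type*} [Fintype ι] [NormedAddCommGroup E] [NormedSpace ℝ E]
    [TopologicalSpace Y] {z : ι → Y → E} (hz : ∀ i, Continuous (z i)) :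
    Continuous fun y ↦ sumSMul fun i ↦ z i y :=
  continuous_finsetSum _ fun i _ ↦
    ((ContinuousLinearMap.smulRightL ℝ (ι → ℝ) E (.proj i)).continuous).comp (hz i)

theorem surjective_sumSMul {ι E : Type*} [Fintype ι] [NormedAddCommGroup E] [NormedSpace ℝ E]
    {z : ι → E} (hz : Submodule.span ℝ (range z) = ⊤) : Function.Surjective (sumSMul z) := by
  intro y
  obtain ⟨ρ, hρ⟩ := (Submodule.mem_span_range_iff_exists_fun ℝ).1 (hz ▸ Submodule.mem_top : y ∈ _)
  exact ⟨ρ, (sumSMul_apply z ρ).trans hρ⟩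

theorem exists_continuous_norm_comp_sub_id_lt {Y E F : Type*} [TopologicalSpace Y] [NormalSpace Y]
    [ParacompactSpace Y] [NormedAddCommGroup E] [NormedSpace ℝ E] [FiniteDimensional ℝ E]
    [NormedAddCommGroup F] [NormedSpace ℝ F] {L : Y → F →L[ℝ] E} (hL : Continuous L) {K : Set Y}
    (hK : IsClosed K) (h : ∀ y ∈ K, Function.Surjective (L y)) {δ : ℝ} (hδ : 0 < δ) :
    ∃ R : C(Y, E →L[ℝ] F), ∀ y ∈ K, ‖L y ∘L R y - .id ℝ E‖ < δ := by
  refine exists_continuous_forall_mem_convex_of_local_const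
    (t := fun y ↦ {R : E →L[ℝ] F | y ∈ K → ‖L y ∘L R - .id ℝ E‖ < δ}) (fun y ↦ ?_) fun y ↦ ?_
  · by_cases hy : y ∈ K
    · simpa [hy, Set.preimage, dist_eq_norm] using
        (convex_ball (ContinuousLinearMap.id ℝ E) δ).linear_preimage
          (ContinuousLinearMap.compL ℝ E F E (L y)).toLinearMap
    · simpa [hy] using convex_univ
  by_cases hy : y ∈ K
  · obtain ⟨R, hR⟩ := (L y).toLinearMap.exists_rightInverse_of_surjective
      (LinearMap.range_eq_top.2 (h y hy))
    refine ⟨R.toContinuousLinearMap, ?_⟩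
    have hRid : L y ∘L R.toContinuousLinearMap = .id ℝ E :=
      ContinuousLinearMap.ext fun v ↦ congrArg (· v) hR
    have hcont : Continuous fun y' ↦ ‖L y' ∘L R.toContinuousLinearMap - .id ℝ E‖ := by fun_prop
    filter_upwards [hcont.continuousAt.eventually_lt_const (by simpa [hRid] using hδ)] with y' hy' _
    exact hy'
  · exact ⟨0, (hK.isOpen_compl.eventually_mem hy).mono fun y' hy' hyK ↦ absurd hyK hy'⟩

end RightInverse

/-! ### Local steering -/

theorem exists_contDiff_eq_smul_add_smul {E F : Type u} [NormedAddCommGroup E] [NormedSpace ℝ E]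
    [NormedAddCommGroup F] [NormedSpace ℝ F] [CompleteSpace F] {h : ℝ × E → F}
    (hh : ContDiff ℝ (⊤ : ℕ∞) h) (h₀ : ∀ y, h (0, y) = 0) {h' : E → F}
    (hderiv : ∀ y, HasDerivAt (fun s ↦ h (s, y)) (h' y) 0) :
    ∃ k : ℝ × E → F, ContDiff ℝ (⊤ : ℕ∞) k ∧ ∀ s y, h (s, y) = s • (h' y + s • k (s, y)) := by
  obtain ⟨g, hg, hhg, hg₀⟩ := exists_contDiff_eq_smul hh h₀
  have hg' (y : E) : g (0, y) = h' y := by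
    refine (hg₀ y).trans (HasDerivAt.unique ?_ (hderiv y))
    exact hasDerivAt_comp_contDiff hh ((hasDerivAt_id (0 : ℝ)).prodMk (hasDerivAt_const 0 y))
  obtain ⟨k, hk, hgk, -⟩ := exists_contDiff_eq_smul (h := fun z : ℝ × E ↦ g z - g (0, z.2))
    (by fun_prop) fun y ↦ sub_self _
  refine ⟨k, hk, fun s y ↦ ?_⟩
  rw [← hgk, hhg, ← hg']
  simp

theorem exists_continuousOn_fixedPoint {Λ E : Type*} [TopologicalSpace Λ] [MetricSpace E]
    {G : Λ × E → E} (hG : Continuous G) {S : Set Λ} {B : Set E} (hB : IsComplete B)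
    (hBne : B.Nonempty) (hmaps : ∀ l ∈ S, MapsTo (fun x ↦ G (l, x)) B B) {K : ℝ≥0} (hK : K < 1)
    (hlip : ∀ l ∈ S, LipschitzOnWith K (fun x ↦ G (l, x)) B) :
    ∃ f : Λ → E, ContinuousOn f S ∧ ∀ l ∈ S, f l ∈ B ∧ G (l, f l) = f l := by
  obtain ⟨b, hb⟩ := hBne
  have : Nonempty E := ⟨b⟩
  have hfix : ∀ l ∈ S, ∃ x ∈ B, G (l, x) = x := fun l hl ↦
    let ⟨x, hx, hGx, _⟩ := ContractingWith.exists_fixedPoint' hB (hmaps l hl)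
      ⟨hK, (hlip l hl).mapsToRestrict (hmaps l hl)⟩ hb (edist_ne_top _ _)
    ⟨x, hx, hGx⟩
  choose! f hf using hfix
  refine ⟨f, fun l₀ hl₀ ↦ tendsto_iff_dist_tendsto_zero.2 ?_, hf⟩
  have hK' : (0 : ℝ) < 1 - K := sub_pos.2 (by exact_mod_cast hK)
  have hbound : ∀ l ∈ S, dist (f l) (f l₀) ≤ (1 - K : ℝ)⁻¹ * dist (G (l, f l₀)) (f l₀) := by
    intro l hl
    have hcontr := (hlip l hl).dist_le_mul _ (hf l hl).1 _ (hf l₀ hl₀).1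
    have htri := dist_triangle (f l) (G (l, f l₀)) (f l₀)
    rw [(hf l hl).2] at hcontr
    rw [le_inv_mul_iff₀ hK']
    linarith
  have hlim : ContinuousAt (fun l ↦ (1 - K : ℝ)⁻¹ * dist (G (l, f l₀)) (f l₀)) l₀ := by fun_prop
  rw [ContinuousAt, (hf l₀ hl₀).2, dist_self, mul_zero] at hlim
  exact squeeze_zero' (.of_forall fun _ ↦ dist_nonneg)
    (eventually_nhdsWithin_of_forall hbound) (hlim.mono_left nhdsWithin_le_nhds)

theorem exists_pos_continuousOn_fixedPoint {Λ E : Type*} [TopologicalSpace Λ]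
    [NormedAddCommGroup E] [NormedSpace ℝ E] [FiniteDimensional ℝ E]
    {G : ℝ × Λ × E → E} (hG : Continuous G) {G' : ℝ × Λ × E → E →L[ℝ] E} (hG' : Continuous G')
    (hderiv : ∀ ε l x, HasFDerivAt (fun x ↦ G (ε, l, x)) (G' (ε, l, x)) x)
    {Q : Set Λ} (hQ : IsCompact Q) (hzero : ∀ l ∈ Q, G (0, l, 0) = 0)
    (hnorm : ∀ l ∈ Q, ∀ x, ‖G' (0, l, x)‖ < 1 / 2) :
    ∃ r > 0, ∃ f : ℝ × Λ → E, ContinuousOn f (Icc 0 r ×ˢ Q) ∧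
      ∀ ε ∈ Icc 0 r, ∀ l ∈ Q, ‖f (ε, l)‖ ≤ 1 ∧ G (ε, l, f (ε, l)) = f (ε, l) := by
  have : CompleteSpace E := FiniteDimensional.complete ℝ E
  have hball : IsCompact (Metric.closedBall (0 : E) 1) := isCompact_closedBall _ _
  have hcontr : ∀ᶠ ε in 𝓝 (0 : ℝ), ∀ z ∈ Q ×ˢ Metric.closedBall (0 : E) 1,
      ‖G' (ε, z)‖ < 1 / 2 := by
    refine (hQ.prod hball).eventually_forall_of_forall_eventually fun z hz ↦ ?_
    exact hG'.norm.continuousAt.eventually_lt_const (hnorm _ hz.1 _)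
  have hsmall : ∀ᶠ ε in 𝓝 (0 : ℝ), ∀ l ∈ Q, ‖G (ε, l, 0)‖ < 1 / 2 := by
    refine hQ.eventually_forall_of_forall_eventually fun l hl ↦ ?_
    have hcont : Continuous fun q : ℝ × Λ ↦ ‖G (q.1, q.2, 0)‖ := by fun_prop
    exact hcont.continuousAt.eventually_lt_const (by simp [hzero l hl])
  obtain ⟨r, hr, hε⟩ := Metric.eventually_nhds_iff_ball.1 (hcontr.and hsmall)
  have hmem {ε : ℝ} (h : ε ∈ Icc 0 (r / 2)) : ε ∈ Metric.ball 0 r := by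
    rw [mem_ball_zero_iff, Real.norm_of_nonneg h.1]
    linarith [h.2]
  have hlip : ∀ q ∈ Icc 0 (r / 2) ×ˢ Q,
      LipschitzOnWith (1 / 2) (fun x ↦ G (q.1, q.2, x)) (Metric.closedBall 0 1) := fun q hq ↦
    (convex_closedBall _ _).lipschitzOnWith_of_nnnorm_hasFDerivWithin_le
      (fun x _ ↦ (hderiv q.1 q.2 x).hasFDerivWithinAt)
      fun x hx ↦ ((hε _ (hmem hq.1)).1 (q.2, x) ⟨hq.2, hx⟩).le
  have hmaps : ∀ q ∈ Icc 0 (r / 2) ×ˢ Q, MapsTo (fun x ↦ G (q.1, q.2, x))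
      (Metric.closedBall 0 1) (Metric.closedBall 0 1) := by
    intro q hq x hx
    have h₁ := (hlip q hq).norm_sub_le hx (Metric.mem_closedBall_self zero_le_one)
    have h₂ := (hε _ (hmem hq.1)).2 q.2 hq.2
    have h₃ := norm_le_norm_add_norm_sub' (G (q.1, q.2, x)) (G (q.1, q.2, 0))
    rw [mem_closedBall_zero_iff] at hx ⊢
    rw [sub_zero] at h₁
    norm_num at h₁
    linarith
  obtain ⟨f, hf, hfix⟩ := exists_continuousOn_fixedPoint
    (G := fun z : (ℝ × Λ) × E ↦ G (z.1.1, z.1.2, z.2)) (by fun_prop) hball.isComplete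
    ⟨0, Metric.mem_closedBall_self zero_le_one⟩ hmaps
    (by rw [← NNReal.coe_lt_coe]; norm_num) hlip
  exact ⟨r / 2, half_pos hr, f, hf, fun ε hε l hl ↦
    ⟨mem_closedBall_zero_iff.1 (hfix (ε, l) ⟨hε, hl⟩).1, (hfix (ε, l) ⟨hε, hl⟩).2⟩⟩

/-- The anisotropic dilation of `ι → ℝ` of ratio `ε` with weights `m`. -/
def dilate {ι : Type*} (m : ι → ℕ) (ε : ℝ) (ρ : ι → ℝ) : ι → ℝ := fun i ↦ ε ^ m i * ρ i

theorem contDiff_dilate {ι : Type*} [Fintype ι] (m : ι → ℕ) :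
    ContDiff ℝ (⊤ : ℕ∞) fun z : ℝ × (ι → ℝ) ↦ dilate m z.1 z.2 := by
  unfold dilate
  fun_prop

theorem sumSMul_dilate {ι E : Type*} [Fintype ι] [NormedAddCommGroup E] [NormedSpace ℝ E]
    {m : ι → ℕ} {κ : ℕ} (hm : ∀ i, m i ≤ κ) (z : ι → E) (ε : ℝ) (ρ : ι → ℝ) :
    sumSMul (fun i ↦ ε ^ m i • z i) (dilate (fun i ↦ κ - m i) ε ρ) = ε ^ κ • sumSMul z ρ := by
  simp only [sumSMul_apply, Finset.smul_sum, smul_smul, dilate]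
  refine Finset.sum_congr rfl fun i _ ↦ ?_
  rw [mul_right_comm, pow_sub_mul_pow ε (hm i)]

namespace ControlSystem

variable {V E : Type u} [NormedAddCommGroup V] [NormedSpace ℝ V] [CompleteSpace V]
  [NormedAddCommGroup E] [NormedSpace ℝ E] [CompleteSpace E] (X : ControlSystem (ℝ × V) E)
  {p : ℝ≥0∞} [hp : Fact (1 ≤ p)]

theorem hasDerivAt_driftEndpoint_sq_mul {c : ℝ → Control p V} {c' : Control p V}
    (hc : HasDerivAt c c' 0) (θ : ℝ) {y z : E}
    (hz : HasDerivAt (fun s ↦ X.driftless.endpoint (c s) y) z 0) :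
    HasDerivAt (fun s ↦ X.driftEndpoint (s ^ 2 * θ) (c s) y) z 0 := by
  have hpow : HasDerivAt (fun s : ℝ ↦ s ^ 2 * θ) 0 0 := by
    simpa using (hasDerivAt_pow 2 (0 : ℝ)).mul_const θ
  have hcy := hc.prodMk (hasDerivAt_const (0 : ℝ) y)
  have hzero := hasDerivAt_comp_contDiff X.contDiff_driftEndpoint
    ((hasDerivAt_const (0 : ℝ) (0 : ℝ)).prodMk hcy)
  have hsq := hasDerivAt_comp_contDiff X.contDiff_driftEndpoint (hpow.prodMk hcy)
  simp only [driftEndpoint_zero] at hzero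
  rw [hz.unique hzero]
  simpa using hsq

theorem exists_driftEndpoint_sq_mul_eq {A : Type u} [NormedAddCommGroup A] [NormedSpace ℝ A]
    {c : ℝ × A → Control p V} (hc : ContDiff ℝ (⊤ : ℕ∞) c)
    (hc₀ : ∀ a y, X.driftless.endpoint (c (0, a)) y = y) {z : A → E → E}
    (hz : ∀ a y, HasDerivAt (fun s ↦ X.driftless.endpoint (c (s, a)) y) (z a y) 0) :
    ∃ k : ℝ × ℝ × A × E → E, ContDiff ℝ (⊤ : ℕ∞) k ∧ ∀ s θ a y,
      X.driftEndpoint (s ^ 2 * θ) (c (s, a)) y = y + s • (z a y + s • k (s, θ, a, y)) := by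
  let h (q : ℝ × ℝ × A × E) : E :=
    X.driftEndpoint (q.1 ^ 2 * q.2.1) (c (q.1, q.2.2.1)) q.2.2.2 - q.2.2.2
  have hin : ContDiff ℝ (⊤ : ℕ∞) fun q : ℝ × ℝ × A × E ↦
      (q.1 ^ 2 * q.2.1, c (q.1, q.2.2.1), q.2.2.2) := by fun_prop
  have hh : ContDiff ℝ (⊤ : ℕ∞) h := (X.contDiff_driftEndpoint.comp hin).sub (by fun_prop)
  have hderiv (q : ℝ × A × E) : HasDerivAt (fun s ↦ h (s, q)) (z q.2.1 q.2.2) 0 :=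
    have hcurve : HasDerivAt (fun s ↦ c (s, q.2.1)) _ 0 :=
      hasDerivAt_comp_contDiff hc ((hasDerivAt_id (0 : ℝ)).prodMk (hasDerivAt_const 0 q.2.1))
    (X.hasDerivAt_driftEndpoint_sq_mul hcurve q.1 (hz q.2.1 q.2.2)).sub_const q.2.2
  obtain ⟨k, hk, hhk⟩ := exists_contDiff_eq_smul_add_smul hh
    (fun q ↦ by simp [h, driftEndpoint_zero, hc₀]) hderiv
  exact ⟨k, hk, fun s θ a y ↦ sub_eq_iff_eq_add'.1 (hhk s (θ, a, y))⟩

theorem exists_driftEndpoint_eq_add_pow_smul {ι : Type u} [Fintype ι] (p : ℝ≥0∞) [Fact (1 ≤ p)]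
    (w : ι → List V × V)
    {κ : ℕ} (hκ : ∀ i, (w i).1.length ≤ κ) :
    ∃ (c : ℝ × (ι → ℝ) → Control p V) (H : ℝ × ℝ × (ι → ℝ) × E → E), Continuous c ∧
      ContDiff ℝ (⊤ : ℕ∞) H ∧
      (∀ θ ρ y, H (0, θ, ρ, y) =
        sumSMul (fun i ↦ X.driftless.nestedBracket (w i).1 (w i).2 y) ρ) ∧
      ∀ ε θ ρ y, X.driftEndpoint (ε ^ (2 * κ + 2) * θ) (ε • c (ε, ρ)) y =
        y + ε ^ (2 * κ + 1) • H (ε, θ, ρ, y) := by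
  choose g hg hg₀ hderiv using fun i ↦
    X.driftless.exists_hasDerivAt_endpoint_nestedControl (p := p) (w i).1 (w i).2
  obtain ⟨q, hq₀, hq⟩ := X.driftless.exists_control_hasFDerivAt_sumSMul
    (fun i ↦ X.driftless.endpoint_nestedControl_zero (p := p) (w i).1 (w i).2) hderiv
  let scale := dilate fun i ↦ κ - (w i).1.length
  have hscale : ContDiff ℝ (⊤ : ℕ∞) fun z : ℝ × (ι → ℝ) ↦ scale z.1 z.2 := contDiff_dilate _
  have hz (a : ℝ × (ι → ℝ)) (y : E) :
      HasDerivAt (fun s : ℝ ↦ X.driftless.endpoint (q (a.1, s • scale a.1 a.2)) y)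
        (a.1 ^ κ • sumSMul (fun i ↦ g i (a.1, y)) a.2) 0 := by
    have hline : HasDerivAt (fun s : ℝ ↦ s • scale a.1 a.2) (scale a.1 a.2) 0 := by
      simpa using (hasDerivAt_id (0 : ℝ)).smul_const (scale a.1 a.2)
    rw [← sumSMul_dilate hκ]
    exact (hq a.1 y).comp_hasDerivAt_of_eq 0 hline (zero_smul ℝ _).symm
  obtain ⟨k, hk, hqk⟩ := X.exists_driftEndpoint_sq_mul_eq
    (A := ℝ × (ι → ℝ)) (c := fun a ↦ q (a.2.1, a.1 • scale a.2.1 a.2.2)) (by fun_prop)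
    (fun a y ↦ by simp [hq₀]) hz
  refine ⟨fun a ↦ q (1, a.1 ^ κ • scale a.1 a.2),
    fun a ↦ sumSMul (fun i ↦ g i (a.1, a.2.2.2)) a.2.2.1 +
      a.1 • k (a.1 ^ (κ + 1), a.2.1, (a.1, a.2.2.1), a.2.2.2), by fun_prop, ?_,
    fun θ ρ y ↦ by simp [hg₀], fun ε θ ρ y ↦ ?_⟩
  · simp only [sumSMul_apply]
    fun_prop
  · have hcontrol : ε • q (1, ε ^ κ • scale ε ρ) = q (ε, ε ^ (κ + 1) • scale ε ρ) := by
      rw [← map_smul, Prod.smul_mk, smul_smul, smul_eq_mul, mul_one, pow_succ']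
    rw [hcontrol, show ε ^ (2 * κ + 2) = (ε ^ (κ + 1)) ^ 2 by ring]
    refine (hqk (ε ^ (κ + 1)) θ (ε, ρ) y).trans ?_
    module

end ControlSystem

theorem exists_pos_continuousOn_eq_smul {E F : Type*} [NormedAddCommGroup E] [NormedSpace ℝ E]
    [FiniteDimensional ℝ E] [NormedAddCommGroup F] [NormedSpace ℝ F]
    {H : ℝ × ℝ × F × E → E} (hH : ContDiff ℝ (⊤ : ℕ∞) H) {L : E → F →L[ℝ] E} (hL : Continuous L)
    (hH₀ : ∀ θ ρ y, H (0, θ, ρ, y) = L y ρ) {K : Set E} (hK : IsCompact K)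
    (hsurj : ∀ y ∈ K, Function.Surjective (L y)) :
    ∃ r > 0, ∃ ρ : ℝ × ℝ × E × E → F,
      ContinuousOn ρ (Icc 0 r ×ˢ Icc 0 1 ×ˢ K ×ˢ Metric.closedBall 0 1) ∧
      ∀ z ∈ Icc 0 r ×ˢ Icc 0 1 ×ˢ K ×ˢ Metric.closedBall 0 1,
        H (z.1, z.2.1, ρ z, z.2.2.1) = z.1 • z.2.2.2 := by
  obtain ⟨R, hR⟩ := exists_continuous_norm_comp_sub_id_lt hL hK.isClosed hsurj one_half_pos
  let H' (z : ℝ × ℝ × F × E) : F →L[ℝ] E :=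
    fderiv ℝ H z ∘L (.inr ℝ ℝ _ ∘L .inr ℝ ℝ _ ∘L .inl ℝ _ E)
  have hH'cont : Continuous H' := by
    have := hH.continuous_fderiv (by simp)
    fun_prop
  have hH' (ε θ : ℝ) (ρ : F) (y : E) :
      HasFDerivAt (fun ρ ↦ H (ε, θ, ρ, y)) (H' (ε, θ, ρ, y)) ρ :=
    (hH.differentiable (by simp) _).hasFDerivAt.comp ρ <| (hasFDerivAt_prodMk_right ε _).comp ρ <|
      (hasFDerivAt_prodMk_right θ _).comp ρ (hasFDerivAt_prodMk_left ρ y)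
  let G (z : ℝ × (ℝ × E × E) × E) : E :=
    z.2.2 + z.1 • z.2.1.2.2 - H (z.1, z.2.1.1, R z.2.1.2.1 z.2.2, z.2.1.2.1)
  let G' (z : ℝ × (ℝ × E × E) × E) : E →L[ℝ] E :=
    .id ℝ E - H' (z.1, z.2.1.1, R z.2.1.2.1 z.2.2, z.2.1.2.1) ∘L R z.2.1.2.1
  have hG' (ε : ℝ) (l : ℝ × E × E) (x : E) :
      HasFDerivAt (fun x ↦ G (ε, l, x)) (G' (ε, l, x)) x :=
    ((hasFDerivAt_id x).add_const (ε • l.2.2)).sub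
      ((hH' ε l.1 (R l.2.1 x) l.2.1).comp x (R l.2.1).hasFDerivAt)
  have hnorm : ∀ l ∈ Icc 0 1 ×ˢ K ×ˢ Metric.closedBall (0 : E) 1, ∀ x, ‖G' (0, l, x)‖ < 1 / 2 := by
    rintro ⟨θ, y, v⟩ ⟨-, hy, -⟩ x
    have hLy := hH' 0 θ (R y x) y
    simp only [hH₀] at hLy
    simp only [G', ← (L y).hasFDerivAt.unique hLy, norm_sub_rev (ContinuousLinearMap.id ℝ E)]
    exact hR y hy
  obtain ⟨r, hr, ζ, hζ, hfix⟩ := exists_pos_continuousOn_fixedPoint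
    (by fun_prop : Continuous G) (by fun_prop : Continuous G') hG'
    (isCompact_Icc.prod (hK.prod (isCompact_closedBall 0 1))) (fun l _ ↦ by simp [G, hH₀]) hnorm
  refine ⟨r, hr, fun z ↦ R z.2.2.1 (ζ z), by fun_prop, fun z hz ↦ ?_⟩
  have hG := (hfix z.1 hz.1 z.2 hz.2).2
  exact (sub_eq_zero.1 (add_eq_left.1 ((add_sub_assoc _ _ _).symm.trans hG))).symm

theorem continuousOn_of_norm_le_mul_rpow {α F : Type*} [TopologicalSpace α]
    [NormedAddCommGroup F] {f : α → F} {s : Set α} {δ : α → ℝ} {C a : ℝ} (ha : 0 < a)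
    (hδ : ContinuousOn δ s) (hδ₀ : ∀ z ∈ s, 0 ≤ δ z) (hf : ∀ z ∈ s, ‖f z‖ ≤ C * δ z ^ a)
    (hcont : ∀ z ∈ s, 0 < δ z → ContinuousWithinAt f s z) : ContinuousOn f s := by
  intro z hz
  rcases (hδ₀ z hz).lt_or_eq with hpos | hzero
  · exact hcont z hz hpos
  · have hlim : Tendsto (fun y ↦ C * δ y ^ a) (𝓝[s] z) (𝓝 0) := by
      simpa [← hzero, Real.zero_rpow ha.ne'] using
        (((hδ z hz).rpow_const (.inr ha.le)).const_mul C).tendsto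
    have hfz : f z = 0 := norm_le_zero_iff.1 ((hf z hz).trans_eq (by
      rw [← hzero, Real.zero_rpow ha.ne', mul_zero]))
    rw [ContinuousWithinAt, hfz]
    exact squeeze_zero_norm' (eventually_nhdsWithin_of_forall hf) hlim

/-- The size of the steering problem `z = (τ, y, y')`: reach `y'` from `y` with drift `τ`. -/
def steeringCost {E : Type*} [NormedAddCommGroup E] (z : ℝ × E × E) : ℝ := z.1 + ‖z.2.2 - z.2.1‖

/-- The steering problems of nonnegative drift and size at most `r` which start in `K`. -/
def steeringDomain {E : Type*} [NormedAddCommGroup E] (K : Set E) (r : ℝ) : Set (ℝ × E × E) :=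
  {z | 0 ≤ z.1 ∧ z.2.1 ∈ K ∧ steeringCost z ≤ r}

theorem steeringCost_nonneg {E : Type*} [NormedAddCommGroup E] {z : ℝ × E × E} (hz : 0 ≤ z.1) :
    0 ≤ steeringCost z := add_nonneg hz (norm_nonneg _)

theorem continuous_steeringCost {E : Type*} [NormedAddCommGroup E] :
    Continuous (steeringCost : ℝ × E × E → ℝ) := by
  unfold steeringCost
  fun_prop

section Rescaling

variable {E : Type*} [NormedAddCommGroup E] [NormedSpace ℝ E]

/-- The steering problem `z` brought to unit size, in the coordinates `(ε, θ, y, v)` where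
`ε ^ N` is the size of `z`, the drift is `ε ^ N * θ` and the displacement is `ε ^ N • v`. -/
def rescale (N : ℕ) (z : ℝ × E × E) : ℝ × ℝ × E × E :=
  (steeringCost z ^ (N : ℝ)⁻¹, (steeringCost z)⁻¹ * z.1, z.2.1,
    (steeringCost z)⁻¹ • (z.2.2 - z.2.1))

theorem continuousAt_rescale (N : ℕ) {z : ℝ × E × E} (hz : 0 < steeringCost z) :
    ContinuousAt (rescale N) z := by
  have := continuous_steeringCost (E := E)
  unfold rescale
  fun_prop (disch := simp [hz.ne'])

theorem mapsTo_rescale {K : Set E} {r : ℝ} (hr : 0 ≤ r) {N : ℕ} (hN : N ≠ 0) :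
    MapsTo (rescale N) (steeringDomain K (r ^ N))
      (Icc 0 r ×ˢ Icc 0 1 ×ˢ K ×ˢ Metric.closedBall 0 1) := by
  intro z ⟨hz, hzK, hzr⟩
  have hcost := steeringCost_nonneg hz
  have hdiv {a : ℝ} (ha : a ≤ steeringCost z) : (steeringCost z)⁻¹ * a ≤ 1 := by
    rw [inv_mul_eq_div]
    exact div_le_one_of_le₀ ha hcost
  refine ⟨⟨Real.rpow_nonneg hcost _, ?_⟩, ⟨by unfold rescale; positivity, hdiv ?_⟩, hzK, ?_⟩
  · exact (Real.rpow_inv_le_iff_of_pos hcost hr (by positivity)).2 (by exact_mod_cast hzr)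
  · exact le_add_of_nonneg_right (norm_nonneg _)
  · rw [mem_closedBall_zero_iff]
    refine (norm_smul_of_nonneg (inv_nonneg.2 hcost) _).trans_le (hdiv ?_)
    exact le_add_of_nonneg_left hz

theorem steeringCost_smul_inv_smul {z : ℝ × E × E} (hz : 0 ≤ z.1) :
    steeringCost z * ((steeringCost z)⁻¹ * z.1) = z.1 ∧
      steeringCost z • (steeringCost z)⁻¹ • (z.2.2 - z.2.1) = z.2.2 - z.2.1 := by
  rcases (steeringCost_nonneg hz).eq_or_lt with h | h
  · obtain ⟨h₁, h₂⟩ := (add_eq_zero_iff_of_nonneg hz (norm_nonneg _)).1 h.symm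
    simp [h₁, norm_eq_zero.1 h₂]
  · exact ⟨mul_inv_cancel_left₀ h.ne' _, smul_inv_smul₀ h.ne' _⟩

end Rescaling

namespace ControlSystem

variable {V E : Type u} [NormedAddCommGroup V] [NormedSpace ℝ V] [CompleteSpace V]
  [NormedAddCommGroup E] [NormedSpace ℝ E] [FiniteDimensional ℝ E] (X : ControlSystem (ℝ × V) E)
  (p : ℝ≥0∞) [hp : Fact (1 ≤ p)] {ι : Type u} [Finite ι] {K : Set E}

theorem exists_continuousOn_rescaledSteering [CompleteSpace E] {w : ι → List V × V}
    {κ : ℕ} (hκ : ∀ i, (w i).1.length ≤ κ) (hK : IsCompact K)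
    (hspan : ∀ y ∈ K,
      Submodule.span ℝ (range fun i ↦ X.driftless.nestedBracket (w i).1 (w i).2 y) = ⊤) :
    ∃ r > 0, ∃ u : ℝ × ℝ × E × E → Control p V,
      ContinuousOn u (Icc 0 r ×ˢ Icc 0 1 ×ˢ K ×ˢ Metric.closedBall 0 1) ∧
      ∀ z ∈ Icc 0 r ×ˢ Icc 0 1 ×ˢ K ×ˢ Metric.closedBall 0 1,
        X.driftEndpoint (z.1 ^ (2 * κ + 2) * z.2.1) (z.1 • u z) z.2.2.1 =
          z.2.2.1 + z.1 ^ (2 * κ + 2) • z.2.2.2 := by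
  cases nonempty_fintype ι
  obtain ⟨c, H, hc, hH, hH₀, hcH⟩ := X.exists_driftEndpoint_eq_add_pow_smul p w hκ
  have hbracket (i : ι) : Continuous fun y ↦ X.driftless.nestedBracket (w i).1 (w i).2 y :=
    (X.driftless.contDiff_nestedBracket _ _).continuous
  obtain ⟨r, hr, ρ, hρ, hHρ⟩ := exists_pos_continuousOn_eq_smul hH
    (continuous_sumSMul hbracket) hH₀ hK fun y hy ↦ surjective_sumSMul (hspan y hy)
  refine ⟨r, hr, fun z ↦ c (z.1, ρ z), by fun_prop, fun z hz ↦ ?_⟩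
  rw [hcH, hHρ z hz, smul_smul, ← pow_succ]

theorem exists_localSteering [CompleteSpace E] {w : ι → List V × V}
    {κ : ℕ} (hκ : ∀ i, (w i).1.length ≤ κ) (hK : IsCompact K)
    (hspan : ∀ y ∈ K,
      Submodule.span ℝ (range fun i ↦ X.driftless.nestedBracket (w i).1 (w i).2 y) = ⊤) :
    ∃ r > 0, ∃ C, ∃ k : ℝ × E × E → Control p V, ContinuousOn k (steeringDomain K r) ∧
      ∀ z ∈ steeringDomain K r, X.driftEndpoint z.1 (k z) z.2.1 = z.2.2 ∧
        ‖k z‖ ≤ C * steeringCost z ^ ((2 * κ + 2 : ℕ) : ℝ)⁻¹ := by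
  obtain ⟨r, hr, u, hu, hsteer⟩ := X.exists_continuousOn_rescaledSteering p hκ hK hspan
  set N := 2 * κ + 2
  obtain ⟨C, hC⟩ := (isCompact_Icc.prod <| isCompact_Icc.prod <|
    hK.prod (isCompact_closedBall 0 1)).exists_bound_of_continuousOn hu
  have hmaps := mapsTo_rescale (K := K) hr.le (by omega : N ≠ 0)
  have hbound : ∀ z ∈ steeringDomain K (r ^ N),
      ‖steeringCost z ^ (N : ℝ)⁻¹ • u (rescale N z)‖ ≤ C * steeringCost z ^ (N : ℝ)⁻¹ := by
    intro z hz
    have hε := Real.rpow_nonneg (steeringCost_nonneg hz.1) (N : ℝ)⁻¹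
    rw [norm_smul, Real.norm_of_nonneg hε, mul_comm]
    exact mul_le_mul_of_nonneg_right (hC _ (hmaps hz)) hε
  refine ⟨r ^ N, by positivity, C, fun z ↦ steeringCost z ^ (N : ℝ)⁻¹ • u (rescale N z), ?_,
    fun z hz ↦ ⟨?_, hbound z hz⟩⟩
  · refine continuousOn_of_norm_le_mul_rpow (by positivity) continuous_steeringCost.continuousOn
      (fun z hz ↦ steeringCost_nonneg hz.1) hbound fun z hz hpos ↦ ?_
    exact (continuous_steeringCost.continuousAt.rpow_const (.inl hpos.ne')).continuousWithinAt.smul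
      ((hu _ (hmaps hz)).comp (continuousAt_rescale N hpos).continuousWithinAt hmaps)
  · have hz' := hsteer _ (hmaps hz)
    obtain ⟨hτ, hv⟩ := steeringCost_smul_inv_smul hz.1
    have hpow := Real.rpow_inv_natCast_pow (steeringCost_nonneg hz.1) (by omega : N ≠ 0)
    simp only [rescale, hpow, hτ, hv, add_sub_cancel] at hz'
    exact hz'

end ControlSystem

/-! ### Global steering without drift -/

theorem of_forall_small_step {P : ℝ → Prop} {a b δ : ℝ} (hδ : 0 < δ) (hab : a ≤ b) (ha : P a)
    (hstep : ∀ s t, a ≤ s → s ≤ t → t ≤ b → t - s ≤ δ → P s → P t) : P b := by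
  have hmin (n : ℕ) : P (min (a + n * δ) b) := by
    induction n with
    | zero => simpa [hab] using ha
    | succ n ih =>
      push_cast
      refine hstep _ _ (le_min (by nlinarith [n.cast_nonneg (α := ℝ)]) hab)
        (min_le_min_right _ (by nlinarith)) (min_le_right _ _) ?_ ih
      rcases min_cases (a + n * δ) b with h | h
      · linarith [min_le_left (a + (n + 1) * δ) b]
      · linarith [min_le_right (a + (n + 1) * δ) b]
  obtain ⟨n, hn⟩ := exists_nat_ge ((b - a) / δ)
  rw [div_le_iff₀ hδ] at hn
  simpa [show b ≤ a + n * δ by linarith] using hmin n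

section RadialPoint

variable {E : Type*} [NormedAddCommGroup E] [NormedSpace ℝ E] (x : E)

/-- The point of the segment from `x` to `y` reached at time `s` at speed less than `1`;
it is `y` from time `1 + ‖y - x‖` on. -/
def radialPoint (s : ℝ) (y : E) : E := x + min 1 (s / (1 + ‖y - x‖)) • (y - x)

theorem continuous_radialPoint (s : ℝ) : Continuous (radialPoint x s) := by
  unfold radialPoint
  fun_prop (disch := intros; positivity)

theorem radialPoint_zero (y : E) : radialPoint x 0 y = x := by simp [radialPoint]

theorem radialPoint_self (s : ℝ) : radialPoint x s x = x := by simp [radialPoint]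

variable {x} {s t : ℝ} {y : E}

theorem radialPoint_of_le (h : 1 + ‖y - x‖ ≤ s) : radialPoint x s y = y := by
  have : 1 ≤ s / (1 + ‖y - x‖) := (one_le_div (by positivity)).2 h
  simp [radialPoint, this]

theorem norm_radialPoint_sub_radialPoint_le (hst : s ≤ t) :
    ‖radialPoint x t y - radialPoint x s y‖ ≤ t - s := by
  set d := 1 + ‖y - x‖
  have hd₀ : 0 < d := by positivity
  have hmono : s / d ≤ t / d := by gcongr
  have hmin : |min 1 (t / d) - min 1 (s / d)| ≤ t / d - s / d := by
    rw [abs_of_nonneg (sub_nonneg.2 (min_le_min_left _ hmono))]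
    rcases min_cases 1 (s / d) with h | h
    · linarith [min_le_left 1 (t / d)]
    · linarith [min_le_right 1 (t / d)]
  calc ‖radialPoint x t y - radialPoint x s y‖
      = |min 1 (t / d) - min 1 (s / d)| * ‖y - x‖ := by
        rw [radialPoint, radialPoint, add_sub_add_left_eq_sub, ← sub_smul, norm_smul,
          Real.norm_eq_abs]
    _ ≤ (t / d - s / d) * d := by gcongr; linarith
    _ = t - s := by field_simp

theorem norm_radialPoint_sub_le (hs : 0 ≤ s) : ‖radialPoint x s y - x‖ ≤ s := by
  simpa [radialPoint_zero] using norm_radialPoint_sub_radialPoint_le (x := x) (y := y) hs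

end RadialPoint

section ConcatSeq

variable {V : Type*} [NormedAddCommGroup V] [NormedSpace ℝ V] {p : ℝ≥0∞} [hp : Fact (1 ≤ p)]

/-- The concatenation, in this order, of the controls `e j, …, e (j + m - 1)` and of `0`. -/
def concatSeq (e : ℕ → Control p V) : ℕ → ℕ → Control p V
  | 0, _ => 0
  | m + 1, j => concat (1 / 2) (e j, concatSeq e m (j + 1))

theorem concatSeq_eq_zero {e : ℕ → Control p V} {j : ℕ} (he : ∀ i ≥ j, e i = 0) (m : ℕ) :
    concatSeq e m j = 0 := by
  induction m generalizing j with
  | zero => rfl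
  | succ m ih =>
    rw [concatSeq, he j le_rfl, ih fun i hi ↦ he i (by omega)]
    exact map_zero _

theorem concatSeq_eq_of_le {e : ℕ → Control p V} {N j m : ℕ} (he : ∀ i ≥ N, e i = 0)
    (hN : N ≤ j + m) (l : ℕ) : concatSeq e (m + l) j = concatSeq e m j := by
  induction m generalizing j with
  | zero => exact concatSeq_eq_zero (fun i hi ↦ he i (by omega)) _
  | succ m ih => rw [add_right_comm, concatSeq, concatSeq, ih (by omega)]

theorem continuous_concatSeq {α : Type*} [TopologicalSpace α] {e : α → ℕ → Control p V}
    (he : ∀ j, Continuous fun y ↦ e y j) (m j : ℕ) : Continuous fun y ↦ concatSeq (e y) m j := by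
  induction m generalizing j with
  | zero => exact continuous_const
  | succ m ih =>
    unfold concatSeq
    fun_prop

end ConcatSeq

namespace ControlSystem

variable {V E : Type u} [NormedAddCommGroup V] [NormedSpace ℝ V]
  [NormedAddCommGroup E] [NormedSpace ℝ E] [CompleteSpace E]
  {p : ℝ≥0∞} [hp : Fact (1 ≤ p)]

theorem endpoint_concatSeq (X : ControlSystem V E) {e : ℕ → Control p V} {ρ : ℕ → E}
    (he : ∀ j, X.endpoint (e j) (ρ j) = ρ (j + 1)) (m j : ℕ) :
    X.endpoint (concatSeq e m j) (ρ j) = ρ (j + m) := by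
  induction m generalizing j with
  | zero => exact X.endpoint_zero _
  | succ m ih =>
    rw [concatSeq, X.endpoint_concat (by norm_num) (by norm_num), he, ih, add_right_comm, add_assoc]

theorem exists_continuous_endpoint_eq_of_seq (X : ControlSystem V E) {α : Type*}
    [TopologicalSpace α] {e : α → ℕ → Control p V} (he : ∀ j, Continuous fun y ↦ e y j)
    {f : α → ℝ} (hf : Continuous f) (hfe : ∀ y (j : ℕ), f y ≤ j → e y j = 0) {ρ : α → ℕ → E}
    (hρ : ∀ y j, X.endpoint (e y j) (ρ y j) = ρ y (j + 1)) :
    ∃ c : α → Control p V, Continuous c ∧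
      (∀ y (n : ℕ), f y ≤ n → X.endpoint (c y) (ρ y 0) = ρ y n) ∧
      ∀ y, (∀ j, e y j = 0) → c y = 0 := by
  let c (y : α) : Control p V := concatSeq (e y) ⌈f y⌉₊ 0
  have hc (y : α) (n : ℕ) (hn : f y ≤ n) : c y = concatSeq (e y) n 0 := by
    obtain ⟨l, rfl⟩ := Nat.exists_eq_add_of_le (Nat.ceil_le.2 hn)
    refine (concatSeq_eq_of_le (N := ⌈f y⌉₊) (fun i hi ↦ hfe y i ?_) (zero_add _).ge l).symm
    exact Nat.ceil_le.1 hi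
  refine ⟨c, continuous_iff_continuousAt.2 fun y₀ ↦ ?_, fun y n hn ↦ ?_,
    fun y hy ↦ concatSeq_eq_zero (fun i _ ↦ hy i) _⟩
  · obtain ⟨n, hn⟩ := exists_nat_gt (f y₀)
    refine (continuous_concatSeq he n 0).continuousAt.congr ?_
    filter_upwards [hf.continuousAt.eventually_lt_const hn] with y hy using (hc y n hy.le).symm
  · rw [hc y n hn, X.endpoint_concatSeq (hρ y), zero_add]

/-- Continuously in `y`, the driftless system can be steered from the point of parameter `s` to
the point of parameter `t` of the segment `[x, y]`, with the control `0` if both are `x` or `y`. -/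
def RadiallySteers (X : ControlSystem V E) (p : ℝ≥0∞) [Fact (1 ≤ p)] (x : E) (s t : ℝ) : Prop :=
  ∃ e : E → Control p V, Continuous e ∧ ∀ y,
    X.endpoint (e y) (radialPoint x s y) = radialPoint x t y ∧
      (y = x ∨ 1 + ‖y - x‖ ≤ s → e y = 0)

variable {X : ControlSystem V E} {x : E} {s t r : ℝ}

theorem RadiallySteers.refl : X.RadiallySteers p x s s :=
  ⟨0, continuous_const, fun _ ↦ ⟨X.endpoint_zero _, fun _ ↦ rfl⟩⟩

theorem RadiallySteers.trans (h : X.RadiallySteers p x s t) (hst : s ≤ t)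
    (h' : X.RadiallySteers p x t r) : X.RadiallySteers p x s r := by
  obtain ⟨e, he, hes⟩ := h
  obtain ⟨e', he', hes'⟩ := h'
  refine ⟨fun y ↦ concat (1 / 2) (e y, e' y), by fun_prop, fun y ↦ ⟨?_, fun hy ↦ ?_⟩⟩
  · rw [X.endpoint_concat (by norm_num) (by norm_num), (hes y).1, (hes' y).1]
  · simp only [(hes y).2 hy, (hes' y).2 (hy.imp_right hst.trans')]
    exact map_zero _

theorem radiallySteers_of_forall_small {δ : ℝ} (hδ : 0 < δ) (hst : s ≤ t)
    (h : ∀ a b, s ≤ a → a ≤ b → b ≤ t → b - a ≤ δ → X.RadiallySteers p x a b) :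
    X.RadiallySteers p x s t :=
  of_forall_small_step hδ hst .refl fun a b hsa hab hbt hδ hsa' ↦
    hsa'.trans hsa (h a b hsa hab hbt hδ)

theorem exists_continuous_endpoint_eq (h : ∀ j : ℕ, X.RadiallySteers p x j (j + 1)) :
    ∃ c : E → Control p V, Continuous c ∧ (∀ y, X.endpoint (c y) x = y) ∧ c x = 0 := by
  choose e he hes using h
  obtain ⟨c, hc, hcy, hc₀⟩ := X.exists_continuous_endpoint_eq_of_seq (e := fun y j ↦ e j y) he
    (f := fun y ↦ 1 + ‖y - x‖) (by fun_prop) (fun y j hj ↦ (hes j y).2 (.inr hj))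
    (ρ := fun y j ↦ radialPoint x j y) (fun y j ↦ by simpa using (hes j y).1)
  refine ⟨c, hc, fun y ↦ ?_, hc₀ x fun j ↦ (hes j x).2 (.inl rfl)⟩
  obtain ⟨n, hn⟩ := exists_nat_ge (1 + ‖y - x‖)
  simpa [radialPoint_zero, radialPoint_of_le hn] using hcy y n hn

theorem radiallySteers_of_span_eq_top [CompleteSpace V] [FiniteDimensional ℝ E]
    (X : ControlSystem (ℝ × V) E) (p : ℝ≥0∞) [Fact (1 ≤ p)]
    (hspan : ∀ y, Submodule.span ℝ
      (range fun w : List V × V ↦ X.driftless.nestedBracket w.1 w.2 y) = ⊤)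
    (x : E) (hs : 0 ≤ s) (hst : s ≤ t) : X.driftless.RadiallySteers p x s t := by
  have hK : IsCompact (Metric.closedBall x t) := isCompact_closedBall x t
  obtain ⟨F, hF⟩ := exists_finset_span_eq_top_of_isCompact
    (fun w : List V × V ↦ (X.driftless.contDiff_nestedBracket w.1 w.2).continuous) hK
    fun y _ ↦ hspan y
  obtain ⟨δ, hδ, C, k, hk, hkz⟩ := X.exists_localSteering p (w := fun w : F ↦ w.1)
    (κ := F.sup fun w ↦ w.1.length) (fun w ↦ Finset.le_sup (f := fun w ↦ w.1.length) w.2) hK hF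
  refine radiallySteers_of_forall_small hδ hst fun a b hsa hab hbt hba ↦ ?_
  let z (y : E) : ℝ × E × E := (0, radialPoint x a y, radialPoint x b y)
  have hzcont : Continuous z := by
    have := continuous_radialPoint x
    fun_prop
  have hz (y : E) : z y ∈ steeringDomain (Metric.closedBall x t) δ := by
    refine ⟨le_rfl, mem_closedBall_iff_norm.2 ?_, ?_⟩
    · exact (norm_radialPoint_sub_le (hs.trans hsa)).trans (hab.trans hbt)
    · exact (zero_add _).trans_le ((norm_radialPoint_sub_radialPoint_le hab).trans hba)
  refine ⟨k ∘ z, hk.comp_continuous hzcont hz, fun y ↦ ⟨?_, fun hy ↦ ?_⟩⟩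
  · rw [← X.driftEndpoint_zero]
    exact (hkz _ (hz y)).1
  · have hcost : steeringCost (z y) = 0 := by
      rcases hy with rfl | hy
      · simp [z, steeringCost, radialPoint_self]
      · simp [z, steeringCost, radialPoint_of_le hy, radialPoint_of_le (hy.trans hab)]
    have hk₀ := (hkz _ (hz y)).2
    rw [hcost, Real.zero_rpow (by positivity), mul_zero, norm_le_zero_iff] at hk₀
    exact hk₀

end ControlSystem

/-! ### Corrections of small cost -/

theorem exists_continuous_pos_forall_abs_le_mem {α : Type*} [PseudoMetricSpace α]
    {O : Set (α × ℝ)} (hO : IsOpen O) (hmem : ∀ z, (z, (0 : ℝ)) ∈ O) :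
    ∃ δ : α → ℝ, Continuous δ ∧ (∀ z, 0 < δ z) ∧ ∀ z t, |t| ≤ δ z → (z, t) ∈ O := by
  rcases Oᶜ.eq_empty_or_nonempty with hempty | hne
  · exact ⟨1, continuous_one, fun _ ↦ one_pos, fun z t _ ↦ by
      simpa using (hempty ▸ notMem_empty (z, t) : (z, t) ∉ Oᶜ)⟩
  have hpos (z : α) : 0 < Metric.infDist (z, (0 : ℝ)) Oᶜ :=
    (hO.isClosed_compl.notMem_iff_infDist_pos hne).1 (not_not.2 (hmem z))
  refine ⟨fun z ↦ Metric.infDist (z, (0 : ℝ)) Oᶜ / 2, ?_, fun z ↦ half_pos (hpos z),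
    fun z t ht ↦ not_not.1 fun h ↦ ?_⟩
  · exact ((Metric.continuous_infDist_pt _).comp (.prodMk_left 0)).div_const 2
  · have hle : Metric.infDist (z, (0 : ℝ)) Oᶜ ≤ |t| := by
      simpa [Prod.dist_eq] using Metric.infDist_le_dist_of_mem (x := (z, (0 : ℝ))) (mem_compl h)
    linarith [hpos z]

theorem exists_continuous_eventuallyEq_zero_forall_mem {E Q M : Type*} [PseudoMetricSpace E]
    [TopologicalSpace Q] [AddCommGroup Q] [Module ℝ Q] [ContinuousSMul ℝ Q] [TopologicalSpace M]
    {φ : Q × E → M} (hφ : Continuous φ) {c : E → Q} (hc : Continuous c) {x : E} (hcx : c x = 0)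
    {U : Set M} (hU : U ∈ 𝓝 (φ (0, x))) (hcU : ∀ y, φ (c y, y) ∈ U) :
    ∃ c' : E → Q, Continuous c' ∧ c' =ᶠ[𝓝 x] 0 ∧ ∀ y, φ (c' y, y) ∈ U := by
  have htube : ∀ᶠ y in 𝓝 x, ∀ s ∈ Icc (0 : ℝ) 1, φ (s • c y, y) ∈ U := by
    refine isCompact_Icc.eventually_forall_of_forall_eventually fun s _ ↦ ?_
    have hcont : Continuous fun z : E × ℝ ↦ φ (z.2 • c z.1, z.1) := by fun_prop
    exact hcont.continuousAt.eventually_mem (by simpa [hcx] using hU)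
  obtain ⟨r, hr, hball⟩ := Metric.eventually_nhds_iff_ball.1 htube
  have hdisj : Disjoint (Metric.closedBall x (r / 2)) (Metric.ball x r)ᶜ :=
    disjoint_compl_right_iff_subset.2 (Metric.closedBall_subset_ball (by linarith))
  obtain ⟨χ, hχ₀, hχ₁, hχ⟩ := exists_continuous_zero_one_of_isClosed
    Metric.isClosed_closedBall Metric.isOpen_ball.isClosed_compl hdisj
  refine ⟨fun y ↦ χ y • c y, by fun_prop, ?_, fun y ↦ ?_⟩
  · filter_upwards [Metric.closedBall_mem_nhds x (half_pos hr)] with y hy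
    simp [hχ₀ hy]
  · by_cases hy : y ∈ Metric.ball x r
    · exact hball y hy _ (hχ y)
    · simpa [hχ₁ hy] using hcU y

section Concat

variable {V : Type*} [NormedAddCommGroup V] [NormedSpace ℝ V] {p : ℝ≥0∞} [hp : Fact (1 ≤ p)]

theorem norm_reparam_zero_inv_le {t C a : ℝ} (ht : 0 < t) {q : Control p V}
    (hq : ‖q‖ ≤ C * t ^ a) :
    ‖reparam 0 t⁻¹ q‖ ≤ C * t ^ (a + (1 / p).toReal - 1) := by
  calc ‖reparam 0 t⁻¹ q‖ ≤ |t⁻¹| * |t⁻¹⁻¹| ^ (1 / p).toReal * ‖q‖ := norm_reparam_apply_le _ _ q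
    _ ≤ t⁻¹ * t ^ (1 / p).toReal * (C * t ^ a) := by
        rw [inv_inv, abs_of_pos ht, abs_of_pos (inv_pos.2 ht)]
        gcongr
    _ = C * t ^ (a + (1 / p).toReal - 1) := by
        rw [Real.rpow_sub ht, Real.rpow_add ht, Real.rpow_one]
        ring

variable {α : Type*} [TopologicalSpace α] {τ : α → ℝ} {q u : α → Control p V}

theorem continuous_reparam_zero_inv (hpt : p ≠ ∞) (hτ : Continuous τ) (hτ₀ : ∀ z, 0 ≤ τ z)
    (hq : Continuous q) {a : ℝ} (ha : 1 < a + (1 / p).toReal)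
    (hbound : ∀ z, τ z = 0 → ∃ C, ∀ᶠ z' in 𝓝 z, ‖q z'‖ ≤ C * τ z' ^ a) :
    Continuous fun z ↦ reparam 0 (τ z)⁻¹ (q z) := by
  refine continuous_iff_continuousAt.2 fun z₀ ↦ ?_
  rcases (hτ₀ z₀).eq_or_lt' with hz₀ | hz₀
  · obtain ⟨C, hC⟩ := hbound z₀ hz₀
    have hs : 0 < a + (1 / p).toReal - 1 := by linarith
    have hle : ∀ᶠ z in 𝓝 z₀,
        ‖reparam 0 (τ z)⁻¹ (q z)‖ ≤ C * τ z ^ (a + (1 / p).toReal - 1) := by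
      filter_upwards [hC] with z hz
      rcases (hτ₀ z).eq_or_lt' with h | h
      · simp only [h, inv_zero, reparam_zero, zero_apply, norm_zero, Real.zero_rpow hs.ne',
          mul_zero, le_refl]
      · exact norm_reparam_zero_inv_le h hz
    have hlim : ContinuousAt (fun z ↦ C * τ z ^ (a + (1 / p).toReal - 1)) z₀ :=
      continuousAt_const.mul (hτ.continuousAt.rpow_const (.inr hs.le))
    simp only [ContinuousAt, hz₀, Real.zero_rpow hs.ne', mul_zero, inv_zero, reparam_zero,
      zero_apply] at hlim ⊢
    exact squeeze_zero_norm' hle hlim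
  · exact (continuousAt_reparam hpt 0 (inv_ne_zero hz₀.ne') (q z₀)).comp
      (f := fun z ↦ (((0 : ℝ), (τ z)⁻¹), q z)) (by fun_prop (disch := exact hz₀.ne'))

/-- Compressing `q z` to the time interval `[0, τ z]` multiplies its norm by `τ z ^ (1 / p - 1)`,
which the bound `τ z ^ a` on `‖q z‖` outweighs exactly when `1 < a + 1 / p`. -/
theorem continuous_concat (hpt : p ≠ ∞) (hτ : Continuous τ) (hτ₀ : ∀ z, 0 ≤ τ z)
    (hτ₁ : ∀ z, τ z < 1) (hq : Continuous q) (hu : Continuous u) {a : ℝ}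
    (ha : 1 < a + (1 / p).toReal)
    (hbound : ∀ z, τ z = 0 → ∃ C, ∀ᶠ z' in 𝓝 z, ‖q z'‖ ≤ C * τ z' ^ a) :
    Continuous fun z ↦ concat (τ z) (q z, u z) := by
  simp only [concat_apply]
  refine (continuous_reparam_zero_inv hpt hτ hτ₀ hq ha hbound).add
    (continuous_iff_continuousAt.2 fun z₀ ↦ ?_)
  have hne : 1 - τ z₀ ≠ 0 := (sub_pos.2 (hτ₁ z₀)).ne'
  exact (continuousAt_reparam hpt (-τ z₀ / (1 - τ z₀)) (inv_ne_zero hne) (u z₀)).comp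
    (f := fun z ↦ ((-τ z / (1 - τ z), (1 - τ z)⁻¹), u z)) (by fun_prop (disch := exact hne))

end Concat

namespace ControlSystem

variable {V E : Type u} [NormedAddCommGroup V] [NormedSpace ℝ V]
  [NormedAddCommGroup E] [NormedSpace ℝ E] [CompleteSpace E]
  {p : ℝ≥0∞} [hp : Fact (1 ≤ p)] (X : ControlSystem (ℝ × V) E)

/-- The point that the control `u`, with drift multiplied by `r`, steers to `y`: the inverse of
`X.driftEndpoint r u`. -/
def driftOrigin (r : ℝ) (u : Control p V) (y : E) : E := X.driftEndpoint (-r) (reverse u) y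

theorem driftOrigin_driftEndpoint (r : ℝ) (u : Control p V) (y : E) :
    X.driftOrigin r u (X.driftEndpoint r u y) = y :=
  X.driftEndpoint_reverse_driftEndpoint r u y

theorem driftEndpoint_driftOrigin (r : ℝ) (u : Control p V) (y : E) :
    X.driftEndpoint r u (X.driftOrigin r u y) = y :=
  X.driftEndpoint_driftEndpoint_reverse r u y

theorem driftOrigin_zero_zero (y : E) : X.driftOrigin 0 (0 : Control p V) y = y := by
  rw [driftOrigin, map_zero, neg_zero, driftEndpoint_zero, endpoint_zero]

@[fun_prop]
theorem contDiff_driftOrigin [CompleteSpace V] {F : Type*} [NormedAddCommGroup F] [NormedSpace ℝ F]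
    {r : F → ℝ} {u : F → Control p V} {y : F → E} (hr : ContDiff ℝ (⊤ : ℕ∞) r)
    (hu : ContDiff ℝ (⊤ : ℕ∞) u) (hy : ContDiff ℝ (⊤ : ℕ∞) y) :
    ContDiff ℝ (⊤ : ℕ∞) fun z ↦ X.driftOrigin (r z) (u z) (y z) := by
  have hprod : ContDiff ℝ (⊤ : ℕ∞) fun z ↦ (-r z, reverse (u z), y z) := by fun_prop
  unfold driftOrigin
  exact (X.contDiff_driftEndpoint.comp hprod :)

/-- A correction of duration `t`, followed by the control `P.1` in the remaining time, ends at
`P.2` if its second half applies the control `c z`, for `z` the point where `P.1` has to start,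
and its first half ends at `X.correctionTarget c (P, t)`. -/
def correctionTarget (c : E → Control p V) (P : (Control p V × E) × ℝ) : E :=
  X.driftOrigin (P.2 / 2) (c (X.driftOrigin (1 - P.2) P.1.1 P.1.2))
    (X.driftOrigin (1 - P.2) P.1.1 P.1.2)

/-- The correction of duration `P.2`, reparametrised to `[0,1]`, that precedes the control `P.1.1`
in order to reach `P.1.2` from `x`: its first half is given by the local steering `k` and its
second half by `c`. -/
def correction (k : ℝ × E × E → Control p V) (c : E → Control p V) (x : E)
    (P : (Control p V × E) × ℝ) : Control p V :=
  concat (1 / 2) (k (P.2 / 2, x, X.correctionTarget c P),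
    c (X.driftOrigin (1 - P.2) P.1.1 P.1.2))

variable {X} {k : ℝ × E × E → Control p V} {c : E → Control p V} {x : E}

theorem driftEndpoint_concat_correction {t : ℝ} (h₀ : 0 < t) (h₁ : t < 1) {u : Control p V} {y : E}
    (hk : X.driftEndpoint (t / 2) (k (t / 2, x, X.correctionTarget c ((u, y), t))) x =
      X.correctionTarget c ((u, y), t)) :
    X.driftEndpoint 1 (concat t (X.correction k c x ((u, y), t), u)) x = y := by
  rw [X.driftEndpoint_concat h₀ h₁, correction,
    X.driftEndpoint_concat (by norm_num) (by norm_num), show 1 / 2 * (t * 1) = t / 2 by ring,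
    show (1 - 1 / 2) * (t * 1) = t / 2 by ring, mul_one, hk, correctionTarget,
    driftEndpoint_driftOrigin, driftEndpoint_driftOrigin]

section CompleteSpace

variable [CompleteSpace V]

theorem continuous_correctionTarget (hc : Continuous c) : Continuous (X.correctionTarget c) := by
  unfold correctionTarget
  fun_prop

theorem eventually_norm_correctionTarget_sub_le (hc : c =ᶠ[𝓝 x] 0) {P₀ : Control p V × E}
    (hP₀ : X.driftEndpoint 1 P₀.1 x = P₀.2) :
    ∃ L : ℝ, 0 ≤ L ∧ ∀ᶠ P in 𝓝 (P₀, (0 : ℝ)),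
      ‖X.correctionTarget c P - x‖ ≤ L * max ‖P.1.2 - X.driftEndpoint 1 P.1.1 x‖ |P.2| := by
  let H : (Control p V × E) × ℝ → E :=
    fun P ↦ X.driftOrigin (P.2 / 2) (0 : Control p V) (X.driftOrigin (1 - P.2) P.1.1 P.1.2)
  have hH : ContDiff ℝ (⊤ : ℕ∞) H := by fun_prop
  have hHx (v : Control p V) : H ((v, X.driftEndpoint 1 v x), 0) = x := by
    simp only [H, sub_zero, zero_div, driftOrigin_zero_zero, driftOrigin_driftEndpoint]
  obtain ⟨L, s, hs, hL⟩ :=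
    (hH.of_le (by exact_mod_cast le_top) : ContDiff ℝ 1 H).contDiffAt.exists_lipschitzOnWith
      (x := (P₀, (0 : ℝ)))
  have hendpoint : Continuous fun P : (Control p V × E) × ℝ ↦
      ((P.1.1, X.driftEndpoint 1 P.1.1 x), (0 : ℝ)) := by
    have := X.contDiff_driftEndpoint.continuous.comp
      (f := fun P : (Control p V × E) × ℝ ↦ ((1 : ℝ), P.1.1, x)) (by fun_prop)
    exact (continuous_fst.fst.prodMk this).prodMk continuous_const
  have horigin : Tendsto (fun P : (Control p V × E) × ℝ ↦
      X.driftOrigin (1 - P.2) P.1.1 P.1.2) (𝓝 (P₀, (0 : ℝ))) (𝓝 x) :=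
    Continuous.tendsto' (by fun_prop) _ _ (by rw [sub_zero, ← hP₀, driftOrigin_driftEndpoint])
  refine ⟨L, L.2, ?_⟩
  filter_upwards [hs, hendpoint.continuousAt.eventually_mem (by simpa only [hP₀] using hs),
    horigin.eventually hc] with P hP hP' hcP
  calc ‖X.correctionTarget c P - x‖
      = dist (H P) (H ((P.1.1, X.driftEndpoint 1 P.1.1 x), 0)) := by
        rw [hHx, dist_eq_norm, correctionTarget, hcP]; rfl
    _ ≤ L * dist P ((P.1.1, X.driftEndpoint 1 P.1.1 x), (0 : ℝ)) := hL.dist_le_mul _ hP _ hP'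
    _ = L * max ‖P.1.2 - X.driftEndpoint 1 P.1.1 x‖ |P.2| := by
        rw [Prod.dist_eq, Prod.dist_eq, dist_self, max_eq_right dist_nonneg, dist_eq_norm,
          Real.dist_0_eq_abs]

variable (X) in
theorem exists_continuous_cutoff {r : ℝ} (hr : 0 < r) (hc : Continuous c)
    (hendpoint : ∀ y, X.driftless.endpoint (c y) x = y) (hcx : c x = 0) :
    ∃ c' : E → Control p V, Continuous c' ∧ c' =ᶠ[𝓝 x] 0 ∧
      ∀ y, ‖X.driftOrigin 0 (c' y) y - x‖ < r := by
  have horigin (y : E) : X.driftOrigin 0 (c y) y = x := by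
    simpa only [driftEndpoint_zero, hendpoint] using X.driftOrigin_driftEndpoint 0 (c y) x
  have hcont : Continuous fun q : Control p V × E ↦ X.driftOrigin 0 q.1 q.2 := by fun_prop
  simp only [← dist_eq_norm, ← Metric.mem_ball]
  exact exists_continuous_eventuallyEq_zero_forall_mem hcont hc hcx
    (by simpa only [driftOrigin_zero_zero] using Metric.ball_mem_nhds x hr)
    (fun y ↦ by simpa only [horigin] using Metric.mem_ball_self hr)

/-- A continuous choice of the duration of the correction for the control `P.1` and the target
`P.2`: it vanishes exactly if no correction is needed, is comparable to the error near these
points, and keeps the time and the distance the correction has to cover below `r`. -/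
structure IsCorrectionTime (X : ControlSystem (ℝ × V) E) (c : E → Control p V) (x : E) (r : ℝ)
    (τ : Control p V × E → ℝ) : Prop where
  continuous : Continuous τ
  nonneg P : 0 ≤ τ P
  lt_one P : τ P < 1
  eq_zero_iff P : τ P = 0 ↔ X.driftEndpoint 1 P.1 x = P.2
  eventually_eq P : τ P = 0 → ∀ᶠ Q in 𝓝 P, τ Q = ‖Q.2 - X.driftEndpoint 1 Q.1 x‖
  mem_steeringDomain P : (τ P / 2, x, X.correctionTarget c (P, τ P)) ∈ steeringDomain {x} r

variable (X) in
theorem exists_isCorrectionTime {r : ℝ} (hc : Continuous c)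
    (hr : ∀ y, ‖X.driftOrigin 0 (c y) y - x‖ < r) : ∃ τ, X.IsCorrectionTime c x r τ := by
  have hF : Continuous fun P : Control p V × E ↦ ‖P.2 - X.driftEndpoint 1 P.1 x‖ := by
    have := X.contDiff_driftEndpoint.continuous.comp
      (f := fun P : Control p V × E ↦ ((1 : ℝ), P.1, x)) (by fun_prop)
    exact (continuous_snd.sub this).norm
  have hopen : IsOpen ({P | |P.2| / 2 + ‖X.correctionTarget c P - x‖ < r} ∩ {P | |P.2| < 1}) := by
    have := X.continuous_correctionTarget hc
    refine (isOpen_lt ?_ continuous_const).inter (isOpen_lt ?_ continuous_const) <;> fun_prop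
  obtain ⟨δ, hδ, hδ₀, hmem⟩ := exists_continuous_pos_forall_abs_le_mem hopen fun P ↦ by
    simpa [correctionTarget] using hr _
  have hnonneg (P : Control p V × E) : 0 ≤ min (δ P) ‖P.2 - X.driftEndpoint 1 P.1 x‖ :=
    le_min (hδ₀ P).le (norm_nonneg _)
  replace hmem (P : Control p V × E) :=
    hmem P (min (δ P) ‖P.2 - X.driftEndpoint 1 P.1 x‖)
      ((abs_of_nonneg (hnonneg P)).trans_le (min_le_left _ _))
  have hzero (P : Control p V × E) :
      min (δ P) ‖P.2 - X.driftEndpoint 1 P.1 x‖ = 0 ↔ X.driftEndpoint 1 P.1 x = P.2 := by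
    have herror : ‖P.2 - X.driftEndpoint 1 P.1 x‖ = 0 ↔ X.driftEndpoint 1 P.1 x = P.2 := by
      rw [norm_eq_zero, sub_eq_zero, eq_comm]
    rw [← herror]
    exact ⟨fun h ↦ (min_choice _ _).elim (fun h' ↦ absurd (h'.symm.trans h) (hδ₀ P).ne')
      fun h' ↦ h'.symm.trans h, fun h ↦ by rw [h, min_eq_right (hδ₀ P).le]⟩
  refine ⟨fun P ↦ min (δ P) ‖P.2 - X.driftEndpoint 1 P.1 x‖, hδ.min hF, hnonneg,
    fun P ↦ (le_abs_self _).trans_lt (hmem P).2, hzero, fun P hP ↦ ?_, fun P ↦ ⟨?_, rfl, ?_⟩⟩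
  · have hlt : ‖P.2 - X.driftEndpoint 1 P.1 x‖ < δ P := by
      simpa [(hzero P).1 hP] using hδ₀ P
    filter_upwards [hF.continuousAt.eventually_lt hδ.continuousAt hlt] with Q hQ
    exact min_eq_right hQ.le
  · exact div_nonneg (hnonneg P) zero_le_two
  · have hle := (mem_ofPred.1 (hmem P).1).le
    rwa [abs_of_nonneg (hnonneg P)] at hle

theorem IsCorrectionTime.eventually_steeringCost_le {r : ℝ} {τ : Control p V × E → ℝ}
    (hτ : X.IsCorrectionTime c x r τ) (hc : c =ᶠ[𝓝 x] 0) {P : Control p V × E} (hP : τ P = 0) :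
    ∃ L : ℝ, 0 ≤ L ∧ ∀ᶠ Q in 𝓝 P,
      steeringCost (τ Q / 2, x, X.correctionTarget c (Q, τ Q)) ≤ L * τ Q := by
  obtain ⟨L, hL, htarget⟩ :=
    X.eventually_norm_correctionTarget_sub_le hc ((hτ.eq_zero_iff P).1 hP)
  have hgraph : Tendsto (fun Q ↦ (Q, τ Q)) (𝓝 P) (𝓝 (P, 0)) :=
    tendsto_id.prodMk_nhds (hτ.continuous.tendsto' P 0 hP)
  refine ⟨1 + L, by positivity, ?_⟩
  filter_upwards [hgraph.eventually htarget, hτ.eventually_eq _ hP] with Q hQ hτQ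
  have hτ₀ := hτ.nonneg Q
  rw [← hτQ, abs_of_nonneg hτ₀, max_self] at hQ
  simp only [steeringCost]
  linarith

theorem IsCorrectionTime.exists_eventually_norm_correction_le {r C a : ℝ}
    {τ : Control p V × E → ℝ} (hτ : X.IsCorrectionTime c x r τ) (hc : c =ᶠ[𝓝 x] 0)
    (ha : 0 ≤ a) (hk : ∀ z ∈ steeringDomain {x} r, ‖k z‖ ≤ C * steeringCost z ^ a)
    {P : Control p V × E} (hP : τ P = 0) :
    ∃ C' : ℝ, ∀ᶠ Q in 𝓝 P, ‖X.correction k c x (Q, τ Q)‖ ≤ C' * τ Q ^ a := by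
  obtain ⟨L, hL, hcost⟩ := hτ.eventually_steeringCost_le hc hP
  have horigin : Tendsto (fun Q : Control p V × E ↦ X.driftOrigin (1 - τ Q) Q.1 Q.2)
      (𝓝 P) (𝓝 x) := by
    have := hτ.continuous
    refine Continuous.tendsto' (by fun_prop) _ _ ?_
    rw [hP, sub_zero, ← (hτ.eq_zero_iff P).1 hP, driftOrigin_driftEndpoint]
  let A : Control p V × Control p V →L[ℝ] Control p V := concat (1 / 2)
  refine ⟨‖A‖ * (|C| * L ^ a), ?_⟩
  filter_upwards [hcost, horigin.eventually hc] with Q hQ hcQ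
  set z : ℝ × E × E := (τ Q / 2, x, X.correctionTarget c (Q, τ Q))
  have hz : z ∈ steeringDomain {x} r := hτ.mem_steeringDomain Q
  have hkz : ‖k z‖ ≤ |C| * (L * τ Q) ^ a :=
    calc ‖k z‖ ≤ C * steeringCost z ^ a := hk z hz
      _ ≤ |C| * (L * τ Q) ^ a := by
        have := steeringCost_nonneg hz.1
        gcongr
        exact le_abs_self C
  calc ‖X.correction k c x (Q, τ Q)‖ = ‖A (k z, 0)‖ := by rw [correction, hcQ]; rfl
    _ ≤ ‖A‖ * ‖k z‖ := by simpa using A.le_opNorm (k z, 0)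
    _ ≤ ‖A‖ * (|C| * (L * τ Q) ^ a) := by gcongr
    _ = ‖A‖ * (|C| * L ^ a) * τ Q ^ a := by
      rw [Real.mul_rpow hL (hτ.nonneg Q)]
      ring

variable (X) in
theorem exists_continuous_section_of_localSteering (hpt : p ≠ ∞) {r C a : ℝ}
    {τ : Control p V × E → ℝ} (ha : 0 ≤ a)
    (hap : 1 < a + (1 / p).toReal) (hk : ContinuousOn k (steeringDomain {x} r))
    (hsteer : ∀ z ∈ steeringDomain {x} r,
      X.driftEndpoint z.1 (k z) z.2.1 = z.2.2 ∧ ‖k z‖ ≤ C * steeringCost z ^ a)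
    (hc : Continuous c) (hcx : c =ᶠ[𝓝 x] 0) (hτ : X.IsCorrectionTime c x r τ) :
    ∃ σ : Control p V × E → Control p V, Continuous σ ∧
      (∀ u y, X.driftEndpoint 1 (σ (u, y)) x = y) ∧
      ∀ u, σ (u, X.driftEndpoint 1 u x) = u := by
  have hτc := hτ.continuous
  refine ⟨fun P ↦ concat (τ P) (X.correction k c x (P, τ P), P.1), ?_, fun u y ↦ ?_, fun u ↦ ?_⟩
  · have htarget := X.continuous_correctionTarget hc
    have hkc : Continuous fun P ↦ k (τ P / 2, x, X.correctionTarget c (P, τ P)) :=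
      hk.comp_continuous (by fun_prop) hτ.mem_steeringDomain
    have hcorrection : Continuous fun P ↦ X.correction k c x (P, τ P) :=
      (concat (1 / 2)).continuous.comp (hkc.prodMk (by fun_prop))
    exact continuous_concat hpt hτc hτ.nonneg hτ.lt_one hcorrection continuous_fst hap
      fun P hP ↦ hτ.exists_eventually_norm_correction_le hcx ha (fun z hz ↦ (hsteer z hz).2) hP
  · rcases (hτ.nonneg (u, y)).eq_or_lt' with h | h
    · simpa only [h, concat_zero] using (hτ.eq_zero_iff _).1 h
    · exact driftEndpoint_concat_correction h (hτ.lt_one _)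
        (hsteer _ (hτ.mem_steeringDomain (u, y))).1
  · simp only [(hτ.eq_zero_iff (u, X.driftEndpoint 1 u x)).2 rfl, concat_zero]

end CompleteSpace

variable (X) in
theorem exists_continuous_section [CompleteSpace V] [FiniteDimensional ℝ E] {ι : Type u} [Finite ι]
    (hpt : p ≠ ∞) (x : E)
    (hspan : ∀ y, Submodule.span ℝ
      (range fun w : List V × V ↦ X.driftless.nestedBracket w.1 w.2 y) = ⊤)
    (w : ι → List V × V) {κ : ℕ} (hκ : ∀ i, (w i).1.length ≤ κ)
    (hw : Submodule.span ℝ (range fun i ↦ X.driftless.nestedBracket (w i).1 (w i).2 x) = ⊤)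
    (hp : 1 < ((2 * κ + 2 : ℕ) : ℝ)⁻¹ + (1 / p).toReal) :
    ∃ σ : Control p V × E → Control p V, Continuous σ ∧
      (∀ u y, X.driftEndpoint 1 (σ (u, y)) x = y) ∧
      ∀ u, σ (u, X.driftEndpoint 1 u x) = u := by
  obtain ⟨r, hr, C, k, hk, hsteer⟩ := X.exists_localSteering p (w := w) hκ
    (isCompact_singleton (x := x)) (by simpa using hw)
  obtain ⟨c, hc, hendpoint, hcx⟩ := X.driftless.exists_continuous_endpoint_eq fun j : ℕ ↦
    X.radiallySteers_of_span_eq_top p hspan x j.cast_nonneg (le_add_of_nonneg_right zero_le_one)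
  obtain ⟨c', hc', hcx', horigin⟩ := X.exists_continuous_cutoff hr hc hendpoint hcx
  obtain ⟨τ, hτ⟩ := X.exists_isCorrectionTime hc' horigin
  exact X.exists_continuous_section_of_localSteering hpt (by positivity) hp hk hsteer hc' hcx' hτ

end ControlSystem

/-! ### Lifting -/

theorem exists_continuous_lift_of_section {A B Z : Type*} [TopologicalSpace A] [TopologicalSpace B]
    [TopologicalSpace Z] {F : A → B} {σ : A × B → A} (hσ : Continuous σ)
    (hFσ : ∀ u y, F (σ (u, y)) = y) (hσF : ∀ u, σ (u, F u) = u) {g : Z × unitInterval → B}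
    (hg : Continuous g) {g₀ : Z → A} (hg₀ : Continuous g₀) (h : ∀ z, F (g₀ z) = g (z, 0)) :
    ∃ gt : Z × unitInterval → A, Continuous gt ∧ (∀ z, gt (z, 0) = g₀ z) ∧
      ∀ z s, F (gt (z, s)) = g (z, s) :=
  ⟨fun w ↦ σ (g₀ w.1, g w), by fun_prop, fun z ↦ by simp only [← h, hσF], fun z s ↦ hFσ _ _⟩

theorem one_lt_inv_add_toReal_of_lt_div {N p : ℝ} (hN : 1 < N) (hp : 0 < p)
    (h : p < N / (N - 1)) : 1 < N⁻¹ + (1 / ENNReal.ofReal p).toReal := by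
  rw [lt_div_iff₀ (sub_pos.2 hN)] at h
  rw [ENNReal.toReal_div, ENNReal.toReal_one, ENNReal.toReal_ofReal hp.le, inv_eq_one_div,
    div_add_div _ _ (by positivity) hp.ne', lt_div_iff₀ (by positivity)]
  linarith

namespace ControlSystem

section ContinuousSection

variable {V E : Type u} [NormedAddCommGroup V] [NormedSpace ℝ V] [CompleteSpace V]
  [NormedAddCommGroup E] [NormedSpace ℝ E] [CompleteSpace E] [FiniteDimensional ℝ E]

theorem exists_forall_lt_exists_continuous_section (X : ControlSystem (ℝ × V) E) (x : E)
    (hspan : ∀ y, Submodule.span ℝ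
      (range fun w : List V × V ↦ X.driftless.nestedBracket w.1 w.2 y) = ⊤) :
    ∃ pc : ℝ, 1 < pc ∧ ∀ p : ℝ, p < pc → ∀ [Fact (1 ≤ ENNReal.ofReal p)],
      ∃ σ : Control (ENNReal.ofReal p) V × E → Control (ENNReal.ofReal p) V, Continuous σ ∧
        (∀ u y, X.driftEndpoint 1 (σ (u, y)) x = y) ∧
        ∀ u, σ (u, X.driftEndpoint 1 u x) = u := by
  obtain ⟨s, hs⟩ := exists_finset_span_eq_top_of_isCompact
    (fun w : List V × V ↦ (X.driftless.contDiff_nestedBracket w.1 w.2).continuous)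
    (isCompact_singleton (x := x)) fun y _ ↦ hspan y
  set κ := s.sup fun w ↦ w.1.length
  have hN : (1 : ℝ) < (2 * κ + 2 : ℕ) := by norm_cast; lia
  refine ⟨(2 * κ + 2 : ℕ) / ((2 * κ + 2 : ℕ) - 1), ?_, fun p hp hfact ↦ ?_⟩
  · rw [lt_div_iff₀ (sub_pos.2 hN)]
    linarith
  · have hp₀ : 0 < p := zero_lt_one.trans_le (ENNReal.one_le_ofReal.1 hfact.out)
    exact X.exists_continuous_section ENNReal.ofReal_ne_top x hspan (fun w : s ↦ w.1)
      (fun w ↦ Finset.le_sup (f := fun w ↦ w.1.length) w.2) (hs x rfl)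
      (one_lt_inv_add_toReal_of_lt_div hN hp₀ hp)

end ContinuousSection

section VectorFields

variable {W E : Type u} [NormedAddCommGroup W] [NormedSpace ℝ W]
  [NormedAddCommGroup E] [NormedSpace ℝ E] {ι : Type*} [Fintype ι]

theorem exists_field_eq_sum (l : ι → W →L[ℝ] ℝ) {Y : ι → E → E}
    (hY : ∀ i, ContDiff ℝ (⊤ : ℕ∞) (Y i)) (hY' : ∀ i, ∃ C, ∀ y, ‖fderiv ℝ (Y i) y‖ ≤ C) :
    ∃ X : ControlSystem W E, ∀ y w, X.field y w = ∑ i, l i w • Y i y := by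
  choose C hC using hY'
  have hlip (i : ι) : LipschitzWith (C i).toNNReal (Y i) :=
    lipschitzWith_of_nnnorm_fderiv_le ((hY i).differentiable (by simp)) fun y ↦
      NNReal.coe_le_coe.1 ((hC i y).trans (Real.le_coe_toNNReal _))
  let field (y : E) : W →L[ℝ] E := ∑ i, (l i).smulRight (Y i y)
  refine ⟨⟨field, ?_, ∑ i, ‖l i‖₊ * (C i).toNNReal, .of_dist_le_mul fun y y' ↦ ?_⟩, ?_⟩
  · exact ContDiff.sum fun i _ ↦ (ContinuousLinearMap.smulRightL ℝ W E (l i)).contDiff.comp (hY i)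
  · calc dist (field y) (field y')
        = ‖∑ i, (l i).smulRight (Y i y - Y i y')‖ := by
          rw [dist_eq_norm, ← Finset.sum_sub_distrib]
          congr! with i
          ext w
          simp [smul_sub]
      _ ≤ ∑ i, ‖l i‖ * ‖Y i y - Y i y'‖ :=
          norm_sum_le_of_le _ fun i _ ↦ ((l i).norm_smulRight_apply _).le
      _ ≤ ∑ i, ‖l i‖ * ((C i).toNNReal * dist y y') := by
          gcongr with i
          simpa only [dist_eq_norm] using (hlip i).dist_le_mul y y'
      _ = _ := by
          push_cast
          simp only [Finset.sum_mul, mul_assoc]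
  · simp [field]

variable {n d : ℕ} {X0 : EuclideanSpace ℝ (Fin n) → EuclideanSpace ℝ (Fin n)}
  {X : Fin d → EuclideanSpace ℝ (Fin n) → EuclideanSpace ℝ (Fin n)}

theorem exists_field_eq_drift_add_sum (hX0 : ContDiff ℝ (⊤ : ℕ∞) X0)
    (hX : ∀ i, ContDiff ℝ (⊤ : ℕ∞) (X i)) (hX0' : ∃ C, ∀ y, ‖fderiv ℝ X0 y‖ ≤ C)
    (hX' : ∃ C, ∀ i y, ‖fderiv ℝ (X i) y‖ ≤ C) :
    ∃ S : ControlSystem (ℝ × EuclideanSpace ℝ (Fin d)) (EuclideanSpace ℝ (Fin n)),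
      ∀ y w, S.field y w = w.1 • X0 y + ∑ i, w.2 i • X i y := by
  obtain ⟨C, hC⟩ := hX'
  obtain ⟨S, hS⟩ := exists_field_eq_sum (ι := Option (Fin d))
    (fun i ↦ i.elim (.fst ℝ ℝ _) fun i ↦ EuclideanSpace.proj i ∘L .snd ℝ ℝ _)
    (Y := fun i ↦ i.elim X0 X) (Option.rec hX0 hX) (Option.rec hX0' fun i ↦ ⟨C, hC i⟩)
  exact ⟨S, fun y w ↦ by simpa using hS y w⟩

variable {S : ControlSystem (ℝ × EuclideanSpace ℝ (Fin d)) (EuclideanSpace ℝ (Fin n))}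

theorem mem_bracketSpan_of_isIteratedBracket
    (hS : ∀ y w, S.field y w = w.1 • X0 y + ∑ i, w.2 i • X i y)
    {Y : EuclideanSpace ℝ (Fin n) → EuclideanSpace ℝ (Fin n)} (hY : IsIteratedBracket X Y) :
    Y ∈ S.driftless.bracketSpan := by
  induction hY with
  | base i =>
    have hXi : S.driftless.nestedBracket [] (EuclideanSpace.single i 1) = X i := by
      ext1 y
      exact (hS y (0, EuclideanSpace.single i 1)).trans (by simp)
    exact hXi ▸ S.driftless.nestedBracket_mem_bracketSpan _ _
  | bracket Y Z _ _ hY hZ => exact lieBracket_mem_bracketSpan hY hZ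

theorem span_nestedBracket_eq_top
    (hS : ∀ y w, S.field y w = w.1 • X0 y + ∑ i, w.2 i • X i y) (hX : BracketGenerating X)
    (y : EuclideanSpace ℝ (Fin n)) :
    Submodule.span ℝ (range fun w : List (EuclideanSpace ℝ (Fin d)) × EuclideanSpace ℝ (Fin d) ↦
      S.driftless.nestedBracket w.1 w.2 y) = ⊤ := by
  rw [eq_top_iff, ← hX y, Submodule.span_le]
  rintro _ ⟨Y, hY, rfl⟩
  exact apply_mem_span_of_mem_bracketSpan (mem_bracketSpan_of_isIteratedBracket hS hY) y

theorem driftEndpoint_one_eq_of_isTrajectory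
    (hS : ∀ y w, S.field y w = w.1 • X0 y + ∑ i, w.2 i • X i y) {p : ℝ≥0∞} [Fact (1 ≤ p)]
    {u : Control p (EuclideanSpace ℝ (Fin d))} {x : EuclideanSpace ℝ (Fin n)}
    {γ : ℝ → EuclideanSpace ℝ (Fin n)} (hγ : IsTrajectory X0 X x u γ) :
    S.driftEndpoint 1 u x = γ 1 := by
  have hsol : S.IsSolution (fun s ↦ ((1 : ℝ), u s)) x γ := by
    refine ⟨hγ.1, fun t ht ↦ ?_⟩
    simpa only [hS, one_smul] using hγ.2 t ht
  exact (hsol.congr_ae (coeFn_withDrift 1 u).symm).endpoint_eq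

end VectorFields

end ControlSystem

end EndpointMap

theorem stmt16_general (n d : ℕ) (x : EuclideanSpace ℝ (Fin n))
    (X0 : EuclideanSpace ℝ (Fin n) → EuclideanSpace ℝ (Fin n))
    (X : Fin d → EuclideanSpace ℝ (Fin n) → EuclideanSpace ℝ (Fin n))
    (hX0smooth : ContDiff ℝ (⊤ : ℕ∞) X0) (hXsmooth : ∀ i, ContDiff ℝ (⊤ : ℕ∞) (X i))
    (hX0der : ∃ C, ∀ y, ‖fderiv ℝ X0 y‖ ≤ C)
    (hXder : ∃ C, ∀ i y, ‖fderiv ℝ (X i) y‖ ≤ C)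
    (hbg : BracketGenerating X) :
    ∃ pc : ℝ, 1 < pc ∧
      ∀ p : ℝ, 1 ≤ p → p < pc →
      ∀ [Fact (1 ≤ ENNReal.ofReal p)],
      ∀ F : Lp (EuclideanSpace ℝ (Fin d)) (ENNReal.ofReal p)
          (volume.restrict (Set.Icc (0:ℝ) 1)) → EuclideanSpace ℝ (Fin n),
        (∀ u : Lp (EuclideanSpace ℝ (Fin d)) (ENNReal.ofReal p)
            (volume.restrict (Set.Icc (0:ℝ) 1)),
          ∃ γ, IsTrajectory X0 X x (⇑u) γ ∧ F u = γ 1) →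
      ∀ (Z : Type*) [TopologicalSpace Z],
      ∀ g : Z × unitInterval → EuclideanSpace ℝ (Fin n), Continuous g →
      ∀ g₀ : Z → Lp (EuclideanSpace ℝ (Fin d)) (ENNReal.ofReal p)
          (volume.restrict (Set.Icc (0:ℝ) 1)), Continuous g₀ →
        (∀ z, F (g₀ z) = g (z, 0)) →
        ∃ gt : Z × unitInterval → Lp (EuclideanSpace ℝ (Fin d)) (ENNReal.ofReal p)
            (volume.restrict (Set.Icc (0:ℝ) 1)),
          Continuous gt ∧ (∀ z, gt (z, 0) = g₀ z) ∧
            ∀ z s, F (gt (z, s)) = g (z, s) := by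
  obtain ⟨S, hS⟩ :=
    EndpointMap.ControlSystem.exists_field_eq_drift_add_sum hX0smooth hXsmooth hX0der hXder
  obtain ⟨pc, hpc, hsection⟩ := S.exists_forall_lt_exists_continuous_section x
    (EndpointMap.ControlSystem.span_nestedBracket_eq_top hS hbg)
  refine ⟨pc, hpc, fun p _ hp _ F hF Z _ g hg g₀ hg₀ hlift ↦ ?_⟩
  obtain ⟨σ, hσ, hFσ, hσF⟩ := hsection p hp
  have hendpoint (u) : S.driftEndpoint 1 u x = F u := by
    obtain ⟨γ, hγ, hFγ⟩ := hF u
    exact (EndpointMap.ControlSystem.driftEndpoint_one_eq_of_isTrajectory hS hγ).trans hFγ.symm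
  simp only [hendpoint] at hFσ hσF
  exact EndpointMap.exists_continuous_lift_of_section hσ hFσ hσF hg hg₀ hlift

/-- for a bounded, globally Lipschitz, smooth affine control system whose
controlled fields `X₁, …, X_d` are bracket generating, there exists `p_c > 1` such that
for every `1 ≤ p < p_c` the endpoint map `F_p : L^p([0,1],ℝ^d) → ℝⁿ`, `F_p(u) = γ_u(1)`,
is a Hurewicz fibration. -/
theorem stmt16 (n d : ℕ) (x : EuclideanSpace ℝ (Fin n))
    (X0 : EuclideanSpace ℝ (Fin n) → EuclideanSpace ℝ (Fin n))
    (X : Fin d → EuclideanSpace ℝ (Fin n) → EuclideanSpace ℝ (Fin n))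
    (hX0smooth : ContDiff ℝ (⊤ : ℕ∞) X0) (hXsmooth : ∀ i, ContDiff ℝ (⊤ : ℕ∞) (X i))
    (hX0bdd : ∃ C, ∀ y, ‖X0 y‖ ≤ C) (hXbdd : ∃ C, ∀ i y, ‖X i y‖ ≤ C)
    (hX0der : ∃ C, ∀ y, ‖fderiv ℝ X0 y‖ ≤ C)
    (hXder : ∃ C, ∀ i y, ‖fderiv ℝ (X i) y‖ ≤ C)
    (hbg : BracketGenerating X) :
    ∃ pc : ℝ, 1 < pc ∧
      ∀ p : ℝ, 1 ≤ p → p < pc →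
      ∀ [Fact (1 ≤ ENNReal.ofReal p)],
      ∀ F : Lp (EuclideanSpace ℝ (Fin d)) (ENNReal.ofReal p)
          (volume.restrict (Set.Icc (0:ℝ) 1)) → EuclideanSpace ℝ (Fin n),
        (∀ u : Lp (EuclideanSpace ℝ (Fin d)) (ENNReal.ofReal p)
            (volume.restrict (Set.Icc (0:ℝ) 1)),
          ∃ γ, IsTrajectory X0 X x (⇑u) γ ∧ F u = γ 1) →
      ∀ (Z : Type*) [TopologicalSpace Z],
      ∀ g : Z × unitInterval → EuclideanSpace ℝ (Fin n), Continuous g →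
      ∀ g₀ : Z → Lp (EuclideanSpace ℝ (Fin d)) (ENNReal.ofReal p)
          (volume.restrict (Set.Icc (0:ℝ) 1)), Continuous g₀ →
        (∀ z, F (g₀ z) = g (z, 0)) →
        ∃ gt : Z × unitInterval → Lp (EuclideanSpace ℝ (Fin d)) (ENNReal.ofReal p)
            (volume.restrict (Set.Icc (0:ℝ) 1)),
          Continuous gt ∧ (∀ z, gt (z, 0) = g₀ z) ∧
            ∀ z s, F (gt (z, s)) = g (z, s) := by
  exact stmt16_general n d x X0 X hX0smooth hXsmooth hX0der hXder hbg
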